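/- arXiv:2309.07905 — 3 statements merged into one kernel-verified Lean document; each statement's English description precedes it below -/
import Mathlib

section
/- For every natural number k ≥ 2, there exist a simple graph G, sets X, Y ⊆ V(G), and a collection 𝒫 of 4(k−1) pairwise disjoint X-Y-paths in G such that every vertex of V(𝒫) is incident to at most one edge of E(G) \ E(𝒫), and yet G contains no k pairwise non-adjacent X-Y-paths. -/
open SimpleGraph

universe u

variable {V : Type u}

/-- A packaged walk in `G`: a pair of endpoints together with a walk between them. -/
abbrev PathPkg (G : SimpleGraph V) : Type u := Σ x : V, Σ y : V, G.Walk x y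

/-- The set of vertices of a packaged walk. -/
def pkgSupport {G : SimpleGraph V} (p : PathPkg G) : Set V := {x | x ∈ p.2.2.support}

/-- The set of edges of a packaged walk. -/
def pkgEdges {G : SimpleGraph V} (p : PathPkg G) : Set (Sym2 V) := {e | e ∈ p.2.2.edges}

/-- `p` is an `X`-`Y`-path: a path whose first endpoint lies in `X` and whose
second endpoint lies in `Y`. -/
def IsXYPath (G : SimpleGraph V) (X Y : Set V) (p : PathPkg G) : Prop :=
  p.2.2.IsPath ∧ p.1 ∈ X ∧ p.2.1 ∈ Y

/-- Two packaged walks are (vertex-)disjoint. -/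
def PkgDisjoint {G : SimpleGraph V} (p q : PathPkg G) : Prop :=
  ∀ x, x ∈ pkgSupport p → x ∉ pkgSupport q

/-- Two packaged walks are non-adjacent: they are vertex-disjoint and no edge of `G`
joins a vertex of one to a vertex of the other. -/
def PkgNonAdj (G : SimpleGraph V) (p q : PathPkg G) : Prop :=
  ∀ a, a ∈ pkgSupport p → ∀ b, b ∈ pkgSupport q → a ≠ b ∧ ¬ G.Adj a b

/-- `Z` separates `X` and `Y` in `G`: every `X`-`Y`-path meets `Z`. -/
def XYSeparates (G : SimpleGraph V) (X Y Z : Set V) : Prop :=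
  ∀ p : PathPkg G, IsXYPath G X Y p → ∃ z, z ∈ Z ∧ z ∈ pkgSupport p

/-- `M` is an induced matching of `G`: a set of edges of `G` such that any two distinct
edges of `M` are at distance at least `2` in `G` (no endpoint of one equals or is
adjacent to an endpoint of the other). -/
def IsInducedMatching (G : SimpleGraph V) (M : Set (Sym2 V)) : Prop :=
  M ⊆ G.edgeSet ∧
    ∀ e₁, e₁ ∈ M → ∀ e₂, e₂ ∈ M → e₁ ≠ e₂ →
      ∀ a, a ∈ e₁ → ∀ b, b ∈ e₂ → a ≠ b ∧ ¬ G.Adj a b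

/-- `G` admits a partition of its edge set into `n` induced matchings
(a strong edge colouring with `n` colours). -/
def HasStrongEdgeColoring (G : SimpleGraph V) (n : ℕ) : Prop :=
  ∃ M : Fin n → Set (Sym2 V),
    (∀ i, IsInducedMatching G (M i)) ∧
    (Pairwise fun i j => Disjoint (M i) (M j)) ∧
    (⋃ i, M i) = G.edgeSet

/-- The strong chromatic index of `G`: the least number of induced matchings into
which the edge set of `G` can be partitioned. -/
noncomputable def strongChromaticIndex (G : SimpleGraph V) : ℕ :=
  sInf {n | HasStrongEdgeColoring G n}

/-- `G` contains the complete graph `K_r` as a topological minor: there are `r` distinct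
branch vertices joined pairwise by internally disjoint paths whose internal vertices
avoid all branch vertices. -/
def HasTopKMinor (G : SimpleGraph V) (r : ℕ) : Prop :=
  ∃ (f : Fin r → V) (P : (i j : Fin r) → i < j → G.Walk (f i) (f j)),
    Function.Injective f ∧
    (∀ i j hij, (P i j hij).IsPath) ∧
    (∀ i j hij x, x ∈ (P i j hij).support → x ≠ f i → x ≠ f j → ∀ l, x ≠ f l) ∧
    (∀ i j hij i' j' hij', (i, j) ≠ (i', j') →
      ∀ x, x ∈ (P i j hij).support → x ∈ (P i' j' hij').support →
        (x = f i ∨ x = f j) ∧ (x = f i' ∨ x = f j'))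

/-- `G` contains the complete graph `K_n` as a minor, witnessed by `n` nonempty,
pairwise disjoint, connected branch sets joined pairwise by edges. -/
def HasKMinor (G : SimpleGraph V) (n : ℕ) : Prop :=
  ∃ B : Fin n → Set V,
    (∀ i, (B i).Nonempty) ∧
    (∀ i, (G.induce (B i)).Connected) ∧
    (Pairwise fun i j => Disjoint (B i) (B j)) ∧
    (∀ i j, i ≠ j → ∃ a ∈ B i, ∃ b ∈ B j, G.Adj a b)

/-- Neighbourhood bit masks of the 32-vertex base graph: four strands `8i, …, 8i+7`
together with a perfect matching. -/
def baseMask (v : ℕ) : ℕ :=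
  ([258, 33554437, 131082, 1044, 268435496, 1048656, 8352, 8388672, 513, 67110144, 2568, 529408, 536881152, 20544, 4235264, 2147500032, 16908288, 327684, 134873088, 1312768, 2621472, 1078984704, 10502144, 4194432, 33619968, 83886082, 167772672, 335806464, 671088656, 1342181376, 2686451712, 1073774592] : List ℕ).getD v 0

/-- The matching partner of a vertex. -/
def baseMate (v : ℕ) : ℕ :=
  ([8, 25, 17, 10, 28, 20, 13, 23, 0, 26, 3, 19, 29, 6, 22, 31, 24, 2, 27, 11, 5, 30, 14, 7, 16, 1, 9, 18, 4, 12, 21, 15] : List ℕ).getD v 0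

def maskX : ℕ := 2 ^ 0 + 2 ^ 8 + 2 ^ 16 + 2 ^ 24
def maskY : ℕ := 2 ^ 7 + 2 ^ 15 + 2 ^ 23 + 2 ^ 31

def baseGraph : SimpleGraph (Fin 32) where
  Adj u v := (baseMask u).testBit v = true
  symm := ⟨by decide +kernel⟩
  loopless := ⟨by decide +kernel⟩

instance : DecidableRel baseGraph.Adj := fun u v =>
  inferInstanceAs (Decidable ((baseMask u).testBit v = true))

def nbMask : ℕ → ℕ → ℕ
  | 0, _ => 0
  | n + 1, r => (if r.testBit n then baseMask n else 0) ||| nbMask n r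

lemma nbMask_spec (n r u v : ℕ) (hu : u < n) (h : r.testBit u = true)
    (hv : (baseMask u).testBit v = true) : (nbMask n r).testBit v = true := by
  induction n with
  | zero => omega
  | succ n ih =>
    rw [nbMask, Nat.testBit_or, Bool.or_eq_true]
    rcases Nat.lt_succ_iff_lt_or_eq.mp hu with h1 | h1
    · exact Or.inr (ih h1)
    · subst h1
      left
      simp [h, hv]

def sepCheck (N R : ℕ) : Bool :=
  (maskX ||| (R ||| N)) == (R ||| N) && (nbMask 32 R ||| (R ||| N)) == (R ||| N) &&
    ((R &&& maskY) ||| N) == N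

lemma testBit_of_or_eq {a b : ℕ} (h : a ||| b = b) {i : ℕ} (ha : a.testBit i = true) :
    b.testBit i = true := by
  rw [← h, Nat.testBit_or, ha, Bool.true_or]

lemma sepCheck_walk (N R : ℕ) (h : sepCheck N R = true) {x y : Fin 32}
    (q : baseGraph.Walk x y) (hx : R.testBit x = true) (hy : maskY.testBit y = true)
    (hq : ∀ b ∈ q.support, N.testBit b = false) : False := by
  simp only [sepCheck, Bool.and_eq_true, beq_iff_eq] at h
  obtain ⟨⟨-, h2⟩, h3⟩ := h
  induction q with
  | nil =>
    have := testBit_of_or_eq h3 (i := _) (by rw [Nat.testBit_and, hx, hy]; rfl)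
    rw [hq _ (by simp)] at this
    exact absurd this (by simp)
  | @cons u v w hadj q ih =>
    refine ih ?_ hy (fun b hb => hq b (by simp [hb]))
    have hv := testBit_of_or_eq h2 (nbMask_spec 32 R u v u.2 hx hadj)
    rw [Nat.testBit_or, hq v (by simp), Bool.or_false] at hv
    exact hv

lemma sepCheck_sound (N R : ℕ) (h : sepCheck N R = true) {x y : Fin 32}
    (q : baseGraph.Walk x y) (hx : maskX.testBit x = true) (hy : maskY.testBit y = true)
    (hq : ∀ b ∈ q.support, N.testBit b = false) : False := by
  refine sepCheck_walk N R h q ?_ hy hq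
  simp only [sepCheck, Bool.and_eq_true, beq_iff_eq] at h
  have hv := testBit_of_or_eq h.1.1 hx
  rwa [Nat.testBit_or, hq x (by simp), Bool.or_false] at hv

/-- Search trees over all paths from a vertex; the leaves carry a vertex set showing that the
neighbourhood of the current initial segment separates `X` from `Y`. -/
inductive Cert : Type
  | skip : Cert
  | sep (R : ℕ) : Cert
  | node (a b c : Cert) : Cert

/-- Check of a search tree; `true` certifies that no second non-adjacent path exists. -/
def dfs : Cert → ℕ → ℕ → ℕ → Bool
  | .skip, _, _, _ => false
  | .sep R, v, _, N => sepCheck (N ||| baseMask v ||| 2 ^ v) R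
  | .node a b c, v, path, N =>
    !maskY.testBit v &&
      ((!(baseMask v).testBit (v + 1) || path.testBit (v + 1) ||
          dfs a (v + 1) (path ||| 2 ^ (v + 1)) (N ||| baseMask v ||| 2 ^ v)) &&
      ((!(baseMask v).testBit (v - 1) || path.testBit (v - 1) ||
          dfs b (v - 1) (path ||| 2 ^ (v - 1)) (N ||| baseMask v ||| 2 ^ v)) &&
        (!(baseMask v).testBit (baseMate v) || path.testBit (baseMate v) ||
          dfs c (baseMate v) (path ||| 2 ^ (baseMate v)) (N ||| baseMask v ||| 2 ^ v))))

lemma nbr_cases : ∀ v w : Fin 32, (baseMask v).testBit w = true →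
    (w : ℕ) = v + 1 ∨ (w : ℕ) = v - 1 ∨ (w : ℕ) = baseMate v := by
  decide +kernel

lemma nbhd_avoid {v y x' y' : Fin 32} {N : ℕ} (p : baseGraph.Walk v y)
    (q : baseGraph.Walk x' y') (hN : ∀ b ∈ q.support, N.testBit b = false)
    (hna : ∀ a ∈ p.support, ∀ b ∈ q.support, a ≠ b ∧ ¬ baseGraph.Adj a b) :
    ∀ b ∈ q.support, (N ||| baseMask v ||| 2 ^ (v : ℕ)).testBit b = false := by
  intro b hb
  obtain ⟨h1, h2⟩ := hna v (by simp) b hb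
  have h2' : (baseMask v).testBit b = false := by
    rw [← Bool.not_eq_true]; exact h2
  rw [Nat.testBit_or, Nat.testBit_or, hN b hb, h2', Nat.testBit_two_pow]
  simpa using fun h => h1 (Fin.ext h)

lemma dfs_sound (f : Cert) : ∀ (v y : Fin 32) (path N : ℕ), dfs f v path N = true →
    ∀ p : baseGraph.Walk v y, p.IsPath → maskY.testBit y = true →
    (∀ u ∈ p.support.tail, path.testBit u = false) →
    ∀ (x' y' : Fin 32) (q : baseGraph.Walk x' y'), maskX.testBit x' = true →
    maskY.testBit y' = true → (∀ b ∈ q.support, N.testBit b = false) →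
    (∀ a ∈ p.support, ∀ b ∈ q.support, a ≠ b ∧ ¬ baseGraph.Adj a b) → False := by
  induction f with
  | skip => intro v y path N h; simp [dfs] at h
  | sep R =>
    intro v y path N h p hp hy hpath x' y' q hx' hy' hN hna
    exact sepCheck_sound _ _ h q hx' hy' (nbhd_avoid p q hN hna)
  | node c₁ c₂ c₃ ih₁ ih₂ ih₃ =>
    intro v y path N h p hp hy hpath x' y' q hx' hy' hN hna
    have hN2 := nbhd_avoid p q hN hna
    rw [dfs, Bool.and_eq_true, Bool.and_eq_true, Bool.and_eq_true] at h
    obtain ⟨h1, ha, hb, hc⟩ := h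
    cases p with
    | nil => simp [hy] at h1
    | @cons _ w _ hadj p =>
      have hadj' : (baseMask v).testBit w = true := hadj
      have hw : path.testBit w = false := hpath w (by simp)
      rw [Walk.cons_isPath_iff] at hp
      have hp' : ∀ u ∈ p.support.tail, (path ||| 2 ^ (w : ℕ)).testBit u = false := by
        intro u hu
        have hnd := hp.1.support_nodup
        rw [← Walk.cons_tail_support, List.nodup_cons] at hnd
        have huw : w ≠ u := fun h => hnd.1 (h ▸ hu)
        have hu' : path.testBit u = false := hpath u (by
          simpa using List.mem_of_mem_tail hu)
        rw [Nat.testBit_or, hu', Nat.testBit_two_pow]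
        simpa using fun h => huw (Fin.ext h)
      have hna' : ∀ a ∈ p.support, ∀ b ∈ q.support, a ≠ b ∧ ¬ baseGraph.Adj a b :=
        fun a ha b hb => hna a (by simp [ha]) b hb
      rcases nbr_cases v w hadj' with h | h | h
      · rw [← h, hadj', hw] at ha
        exact ih₁ w y _ _ ha p hp.1 hy hp' x' y' q hx' hy' hN2 hna'
      · rw [← h, hadj', hw] at hb
        exact ih₂ w y _ _ hb p hp.1 hy hp' x' y' q hx' hy' hN2 hna'
      · rw [← h, hadj', hw] at hc
        exact ih₃ w y _ _ hc p hp.1 hy hp' x' y' q hx' hy' hN2 hna'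

def cert0 : Cert :=
  (.node (.node (.sep 16842752) .skip (.node (.node (.sep 196608) .skip (.node (.node (.sep
    458752) .skip (.node (.node (.sep 983040) .skip (.node (.node (.sep 2031616) .skip (.node
    (.node (.sep 4128768) .skip (.node (.sep 8323072) (.sep 983040) .skip)) (.sep 458752)
    .skip)) (.sep 196608) .skip)) (.sep 65536) .skip)) (.node .skip .skip .skip) .skip)) (.sep
    0) .skip)) .skip (.node (.node (.node (.node (.node (.node (.node (.sep 1530331188) .skip
    (.sep 454492212)) .skip (.sep 453443604)) .skip (.sep 185008132)) .skip (.sep 50528260))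
    .skip (.node (.node (.sep 185532416) .skip (.node (.node (.sep 52363264) .skip (.node (.node
    (.sep 54460416) .skip (.node (.sep 58654720) (.sep 51314688) .skip)) (.sep 50790400) .skip))
    (.sep 50528256) .skip)) (.sep 50397184) .skip)) .skip (.node (.node (.sep 16973836) .skip
    (.sep 16842752)) (.node .skip (.sep 0) (.node (.sep 65536) .skip .skip)) .skip)) .skip
    .skip))

def cert1 : Cert :=
  (.node (.node (.node (.node (.node (.node (.node (.sep 1530331190) .skip (.sep 454492214))
    .skip (.sep 453443606)) .skip (.sep 185008134)) .skip (.sep 50528262)) .skip (.node (.node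
    (.sep 185532418) .skip (.node (.node (.sep 52363266) .skip (.node (.node (.sep 54460418)
    .skip (.node (.sep 58654722) (.sep 51314690) .skip)) (.sep 50790402) .skip)) (.sep 50528258)
    .skip)) (.sep 50397184) .skip)) .skip (.node (.node (.sep 16973838) .skip (.sep 16842752))
    (.node .skip (.sep 0) (.node (.sep 65536) (.node .skip .skip .skip) .skip)) .skip)) .skip
    (.node (.node (.sep 16842752) .skip (.node (.node (.sep 196608) .skip (.node (.node (.sep
    458752) .skip (.node (.node (.sep 983040) .skip (.node (.node (.sep 2031616) .skip (.node
    (.node (.sep 4128768) .skip (.node (.sep 8323072) (.sep 983040) .skip)) (.sep 458752)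
    .skip)) (.sep 196608) .skip)) (.sep 65536) .skip)) .skip .skip)) (.sep 0) .skip)) .skip
    .skip))

def cert2 : Cert :=
  (.node (.node (.node (.node (.node (.node (.node (.sep 905983835) .skip (.sep 905975579))
    .skip (.sep 369100571)) .skip (.sep 100665099)) .skip (.sep 100664067)) .skip (.node (.node
    (.sep 33558283) .skip (.node (.node (.sep 33562371) .skip (.node (.node (.sep 33570563)
    .skip (.node (.sep 33586947) (.sep 33558275) .skip)) (.sep 33556227) .skip)) (.sep 33555203)
    .skip)) (.sep 259) .skip)) .skip (.node (.node (.sep 234881793) .skip (.sep 257)) (.node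
    .skip (.sep 0) (.node (.sep 256) (.node .skip .skip .skip) .skip)) .skip)) .skip (.node
    (.node (.sep 257) .skip (.node (.node (.sep 768) .skip (.node (.node (.sep 1792) .skip
    (.node (.node (.sep 3840) .skip (.node (.node (.sep 7936) .skip (.node (.node (.sep 16128)
    .skip (.node (.sep 32512) (.sep 3840) .skip)) (.sep 1792) .skip)) (.sep 768) .skip)) (.sep
    256) .skip)) .skip .skip)) (.sep 0) .skip)) .skip .skip))

def cert3 : Cert :=
  (.node (.node (.sep 257) .skip (.node (.node (.sep 768) .skip (.node (.node (.sep 1792) .skip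
    (.node (.node (.sep 3840) .skip (.node (.node (.sep 7936) .skip (.node (.node (.sep 16128)
    .skip (.node (.sep 32512) (.sep 3840) .skip)) (.sep 1792) .skip)) (.sep 768) .skip)) (.sep
    256) .skip)) (.node .skip .skip .skip) .skip)) (.sep 0) .skip)) .skip (.node (.node (.node
    (.node (.node (.node (.node (.sep 872429403) .skip (.sep 872421147)) .skip (.sep 335546139))
    .skip (.sep 67110667)) .skip (.sep 67109635)) .skip (.node (.node (.sep 3851) .skip (.node
    (.node (.sep 7939) .skip (.node (.node (.sep 16131) .skip (.node (.sep 32515) (.sep 3843)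
    .skip)) (.sep 1795) .skip)) (.sep 771) .skip)) (.sep 259) .skip)) .skip (.node (.node (.sep
    201327361) .skip (.sep 257)) (.node .skip (.sep 0) (.node (.sep 256) .skip .skip)) .skip))
    .skip .skip))

lemma dfs_true : ∀ x : Fin 32, maskX.testBit x = true →
    ∃ c, dfs c x (2 ^ (x : ℕ)) 0 = true := by
  have hx : ∀ x : Fin 32, maskX.testBit x = true → x = 0 ∨ x = 8 ∨ x = 16 ∨ x = 24 := by
    decide +kernel
  have h0 : dfs cert0 (0 : Fin 32) (2 ^ ((0 : Fin 32) : ℕ)) 0 = true := by decide +kernel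
  have h1 : dfs cert1 (8 : Fin 32) (2 ^ ((8 : Fin 32) : ℕ)) 0 = true := by decide +kernel
  have h2 : dfs cert2 (16 : Fin 32) (2 ^ ((16 : Fin 32) : ℕ)) 0 = true := by decide +kernel
  have h3 : dfs cert3 (24 : Fin 32) (2 ^ ((24 : Fin 32) : ℕ)) 0 = true := by decide +kernel
  intro x h
  rcases hx x h with rfl | rfl | rfl | rfl
  exacts [⟨_, h0⟩, ⟨_, h1⟩, ⟨_, h2⟩, ⟨_, h3⟩]

lemma base_no_pair {x y x' y' : Fin 32} (p : baseGraph.Walk x y) (q : baseGraph.Walk x' y')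
    (hx : maskX.testBit x = true) (hy : maskY.testBit y = true)
    (hx' : maskX.testBit x' = true) (hy' : maskY.testBit y' = true)
    (hna : ∀ a ∈ p.support, ∀ b ∈ q.support, a ≠ b ∧ ¬ baseGraph.Adj a b) : False := by
  classical
  have hb := p.bypass_isPath
  obtain ⟨c, hc⟩ := dfs_true x hx
  refine dfs_sound c x y _ _ hc p.bypass hb hy ?_ x' y' q hx' hy'
    (fun b _ => Nat.zero_testBit _)
    (fun a ha b hb => hna a (p.support_bypass_subset ha) b hb)
  intro u hu
  have hnd := hb.support_nodup
  rw [← Walk.cons_tail_support, List.nodup_cons] at hnd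
  have huw : x ≠ u := fun h => hnd.1 (h ▸ hu)
  rw [Nat.testBit_two_pow]
  simpa using fun h => huw (Fin.ext h)

def vtx (i : Fin 4) (j : Fin 8) : Fin 32 := ⟨8 * i + j, by omega⟩

lemma vtx_adj : ∀ (i : Fin 4) (j : Fin 7), baseGraph.Adj (vtx i j.castSucc) (vtx i j.succ) := by
  decide +kernel

def strand (i : Fin 4) : baseGraph.Walk (vtx i 0) (vtx i 7) :=
  .cons (vtx_adj i 0) (.cons (vtx_adj i 1) (.cons (vtx_adj i 2) (.cons (vtx_adj i 3)
    (.cons (vtx_adj i 4) (.cons (vtx_adj i 5) (.cons (vtx_adj i 6) .nil))))))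

lemma strand_support (i : Fin 4) : (strand i).support = (List.finRange 8).map (vtx i) := by
  rfl

lemma vtx_inj {i i' : Fin 4} {j j' : Fin 8} (h : vtx i j = vtx i' j') : i = i' ∧ j = j' := by
  simp only [vtx, Fin.mk.injEq] at h
  constructor <;> ext <;> omega

lemma strand_isPath (i : Fin 4) : (strand i).IsPath := by
  rw [Walk.isPath_def, strand_support]
  exact (List.nodup_finRange 8).map fun a b h => (vtx_inj h).2

lemma mate_or : ∀ v u : Fin 32, baseGraph.Adj v u →
    (∃ i, s(v, u) ∈ (strand i).edges) ∨ (u : ℕ) = baseMate v := by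
  decide +kernel

/-- The disjoint union of `n` copies of the base graph. -/
def copies (n : ℕ) : SimpleGraph (Fin n × Fin 32) where
  Adj a b := a.1 = b.1 ∧ baseGraph.Adj a.2 b.2
  symm := ⟨fun _ _ h => ⟨h.1.symm, h.2.symm⟩⟩
  loopless := ⟨fun _ h => baseGraph.loopless.irrefl _ h.2⟩

def inj (n : ℕ) (c : Fin n) : baseGraph →g copies n where
  toFun v := (c, v)
  map_rel' h := ⟨rfl, h⟩

def proj (n : ℕ) : copies n →g baseGraph where
  toFun a := a.2
  map_rel' h := h.2

lemma copies_fst {n : ℕ} {a b : Fin n × Fin 32} (p : (copies n).Walk a b) :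
    ∀ v ∈ p.support, v.1 = a.1 := by
  induction p with
  | nil => simp
  | cons h p ih =>
    intro v hv
    rw [Walk.support_cons, List.mem_cons] at hv
    rcases hv with rfl | hv
    · rfl
    · exact (ih v hv).trans h.1.symm

def copyPath (n : ℕ) (c : Fin n) (i : Fin 4) : PathPkg (copies n) :=
  ⟨_, _, (strand i).map (inj n c)⟩

lemma mem_copyPath {n : ℕ} {c : Fin n} {i : Fin 4} {v : Fin n × Fin 32} :
    v ∈ pkgSupport (copyPath n c i) ↔ v.1 = c ∧ v.2 ∈ (strand i).support := by
  simp only [pkgSupport, copyPath, Set.mem_setOf_eq, Walk.support_map, List.mem_map]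
  constructor
  · rintro ⟨a, ha, rfl⟩
    exact ⟨rfl, ha⟩
  · rintro ⟨rfl, h⟩
    exact ⟨v.2, h, rfl⟩

lemma copy_mate {n : ℕ} {v : Fin n × Fin 32} {e : Sym2 (Fin n × Fin 32)}
    (he : e ∈ (copies n).edgeSet) (hv : v ∈ e)
    (hne : ∀ c i, e ∉ pkgEdges (copyPath n c i)) :
    ∃ u : Fin n × Fin 32, e = s(v, u) ∧ u.1 = v.1 ∧ (u.2 : ℕ) = baseMate v.2 := by
  obtain ⟨u, rfl⟩ := Sym2.mem_iff_exists.mp hv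
  rw [mem_edgeSet] at he
  refine ⟨u, rfl, he.1.symm, ?_⟩
  rcases mate_or v.2 u.2 he.2 with ⟨i, hi⟩ | h
  · exfalso
    apply hne v.1 i
    simp only [pkgEdges, copyPath, Set.mem_setOf_eq, Walk.edges_map, List.mem_map]
    refine ⟨_, hi, ?_⟩
    rw [Sym2.map_mk]
    have : u = (v.1, u.2) := Prod.ext he.1.symm rfl
    rw [this]
    rfl
  · exact h

theorem statement_10 (k : ℕ) (hk : 2 ≤ k) :
    ∃ (W : Type) (G : SimpleGraph W) (X Y : Set W) (P : Fin (4 * (k - 1)) → PathPkg G),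
      (∀ i, IsXYPath G X Y (P i)) ∧
      (Pairwise fun i j => PkgDisjoint (P i) (P j)) ∧
      (∀ v, v ∈ (⋃ i, pkgSupport (P i)) →
        Set.Subsingleton
          {e : Sym2 W | e ∈ G.edgeSet ∧ v ∈ e ∧ e ∉ ⋃ i, pkgEdges (P i)}) ∧
      ¬ ∃ Q : Fin k → PathPkg G,
          (∀ i, IsXYPath G X Y (Q i)) ∧
          Pairwise fun i j => PkgNonAdj G (Q i) (Q j) := by
  classical
  let e : Fin (4 * (k - 1)) ≃ Fin 4 × Fin (k - 1) := finProdFinEquiv.symm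
  refine ⟨Fin (k - 1) × Fin 32, copies (k - 1), {a | maskX.testBit a.2 = true},
    {a | maskY.testBit a.2 = true}, fun t => copyPath (k - 1) (e t).2 (e t).1, ?_, ?_, ?_, ?_⟩
  · intro t
    refine ⟨?_, ?_, ?_⟩
    · exact Walk.map_isPath_of_injective (fun a b h => (Prod.ext_iff.mp h).2) (strand_isPath _)
    · have : ∀ i, maskX.testBit (vtx i 0) = true := by decide +kernel
      exact this (e t).1
    · have : ∀ i, maskY.testBit (vtx i 7) = true := by decide +kernel
      exact this (e t).1
  · intro s t hst v hs ht
    rw [mem_copyPath] at hs ht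
    apply hst
    apply e.injective
    refine Prod.ext ?_ (hs.1.symm.trans ht.1)
    have h1 := hs.2
    have h2 := ht.2
    rw [strand_support, List.mem_map] at h1 h2
    obtain ⟨j, -, hj⟩ := h1
    obtain ⟨j', -, hj'⟩ := h2
    exact (vtx_inj (hj.trans hj'.symm)).1
  · rintro v - a ⟨ha, hva, hna⟩ b ⟨hb, hvb, hnb⟩
    have key : ∀ f : Sym2 (Fin (k - 1) × Fin 32),
        f ∉ ⋃ i, pkgEdges (copyPath (k - 1) (e i).2 (e i).1) →
        ∀ c i, f ∉ pkgEdges (copyPath (k - 1) c i) := by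
      intro f hf c i hfc
      apply hf
      rw [Set.mem_iUnion]
      refine ⟨e.symm (i, c), ?_⟩
      rw [e.apply_symm_apply]
      exact hfc
    obtain ⟨u, rfl, hu1, hu2⟩ := copy_mate ha hva (key _ hna)
    obtain ⟨w, rfl, hw1, hw2⟩ := copy_mate hb hvb (key _ hnb)
    have : u = w := Prod.ext (hu1.trans hw1.symm) (Fin.ext (hu2.trans hw2.symm))
    rw [this]
  · rintro ⟨Q, hQ, hna⟩
    obtain ⟨s, t, hst, hc⟩ := Fintype.exists_ne_map_eq_of_card_lt
      (fun i : Fin k => (Q i).1.1) (by simp only [Fintype.card_fin]; omega)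
    have hn := hna hst
    refine base_no_pair ((Q s).2.2.map (proj _)) ((Q t).2.2.map (proj _))
      (hQ s).2.1 (hQ s).2.2 (hQ t).2.1 (hQ t).2.2 ?_
    intro a ha b hb
    rw [Walk.support_map, List.mem_map] at ha hb
    obtain ⟨a, ha, rfl⟩ := ha
    obtain ⟨b, hb, rfl⟩ := hb
    have hab : a.1 = b.1 := by
      rw [copies_fst _ a ha, copies_fst _ b hb]
      exact hc
    obtain ⟨h1, h2⟩ := hn a ha b hb
    exact ⟨fun h => h1 (Prod.ext hab h), fun h => h2 ⟨hab, h⟩⟩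
end

section
/- For every natural number r there exists a constant c = c(r) > 0 such that the following holds: if G is a simple graph that does not contain the complete graph K_r as a topological minor, X, Y ⊆ V(G), and k is a natural number, then either (1) G contains k pairwise non-adjacent X-Y-paths, or (2) there exists a set of fewer than c·k vertices of G that separates X and Y. -/
open SimpleGraph

universe u

variable {V : Type u}

/-- Walk version of separation. -/
def WSep (G : SimpleGraph V) (X Y Z : Set V) : Prop :=
  ∀ x ∈ X, ∀ y ∈ Y, ∀ p : G.Walk x y, ∃ z ∈ Z, z ∈ p.support

/-- There are `k` disjoint `X`-`Y`-paths. -/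
def WLk (G : SimpleGraph V) (X Y : Set V) (k : ℕ) : Prop :=
  ∃ P : Fin k → PathPkg G, (∀ i, IsXYPath G X Y (P i)) ∧
    Pairwise fun i j => PkgDisjoint (P i) (P j)

theorem WSep.swap {G : SimpleGraph V} {X Y Z : Set V} (h : WSep G X Y Z) : WSep G Y X Z := by
  intro y hy x hx p
  obtain ⟨z, hz, hzp⟩ := h x hx y hy p.reverse
  exact ⟨z, hz, by simpa using hzp⟩

theorem lk_of_sets {G : SimpleGraph V} {X Y : Set V} {k : ℕ} (T : Finset V) (hT : T.card = k)
    (A : V → Set V)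
    (hA : ∀ t ∈ T, ∃ x ∈ X, ∃ y ∈ Y, ∃ p : G.Walk x y, ∀ w ∈ p.support, w ∈ A t)
    (hd : ∀ t ∈ T, ∀ t' ∈ T, t ≠ t' → Disjoint (A t) (A t')) : WLk G X Y k := by
  classical
  choose! x hx y hy p hp using hA
  let e := (T.equivFinOfCardEq hT).symm
  refine ⟨fun i => ⟨x (e i), y (e i), (p (e i) (e i).2).bypass⟩, fun i => ⟨Walk.bypass_isPath _,
    hx _ (e i).2, hy _ (e i).2⟩, ?_⟩
  intro i j hij w hw hw'
  have h1 : w ∈ A (e i) := hp _ (e i).2 _ (Walk.support_bypass_subset_support _ hw)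
  have h2 : w ∈ A (e j) := hp _ (e j).2 _ (Walk.support_bypass_subset_support _ hw')
  have hne : (e i : V) ≠ e j := fun h => hij (e.injective (Subtype.ext h))
  exact Set.disjoint_left.1 (hd _ (e i).2 _ (e j).2 hne) h1 h2

theorem lk_index {G : SimpleGraph V} {X : Set V} {k : ℕ} (T : Finset V) (hT : T.card ≤ k)
    (h : WLk G X (T : Set V) k) : ∃ A : V → Set V,
    (∀ t ∈ T, ∃ x ∈ X, ∃ p : G.Walk x t, p.IsPath ∧ ∀ w, w ∈ p.support ↔ w ∈ A t) ∧
    ∀ t ∈ T, ∀ t' ∈ T, t ≠ t' → Disjoint (A t) (A t') := by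
  classical
  obtain ⟨P, hP, hd⟩ := h
  let f : Fin k → T := fun i => ⟨(P i).2.1, (hP i).2.2⟩
  have hf : Function.Injective f := by
    intro i j hij
    by_contra hne
    have hij' : (P i).2.1 = (P j).2.1 := congrArg Subtype.val hij
    refine hd hne (P i).2.1 ?_ ?_
    · simp [pkgSupport]
    · rw [hij']; simp [pkgSupport]
  have hb : Function.Bijective f := by
    rw [Fintype.bijective_iff_injective_and_card]
    refine ⟨hf, le_antisymm (Fintype.card_le_of_injective f hf) (by simpa using hT)⟩
  have hs : ∀ t ∈ T, ∃ i, (P i).2.1 = t := fun t ht => by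
    obtain ⟨i, hi⟩ := hb.2 ⟨t, ht⟩
    exact ⟨i, congrArg Subtype.val hi⟩
  choose g hg using hs
  refine ⟨fun t => {w | ∃ ht : t ∈ T, w ∈ pkgSupport (P (g t ht))}, ?_, ?_⟩
  · intro t ht
    refine ⟨(P (g t ht)).1, (hP _).2.1, (P (g t ht)).2.2.copy rfl (hg t ht), ?_, ?_⟩
    · simpa using (hP _).1
    · intro w; simp [pkgSupport, ht]
  · intro t ht t' ht' hne
    rw [Set.disjoint_left]
    rintro w ⟨_, hw⟩ ⟨_, hw'⟩
    refine hd ?_ w hw hw'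
    intro h
    apply hne
    rw [← hg t ht, ← hg t' ht', h]

theorem walk_split {G : SimpleGraph V} (e : Sym2 V) {a b : V} (p : G.Walk a b) :
    (∃ q : (G.deleteEdges {e}).Walk a b, q.support ⊆ p.support) ∨
    ∃ u v, s(u, v) = e ∧ (∃ q : (G.deleteEdges {e}).Walk a u, q.support ⊆ p.support) ∧
      ∃ q : (G.deleteEdges {e}).Walk v b, q.support ⊆ p.support := by
  induction p with
  | nil => exact Or.inl ⟨Walk.nil, by simp⟩
  | @cons a c b hac p ih =>
    by_cases he : s(a, c) = e
    · rcases ih with ⟨q, hq⟩ | ⟨u, v, huv, ⟨q1, hq1⟩, q2, hq2⟩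
      · exact Or.inr ⟨a, c, he, ⟨Walk.nil, by simp⟩, q, fun x hx => by simp [hq hx]⟩
      · rw [← he] at huv
        rcases Sym2.eq_iff.1 huv with ⟨rfl, rfl⟩ | ⟨rfl, rfl⟩
        · exact Or.inr ⟨u, v, he, ⟨Walk.nil, by simp⟩, q2, fun x hx => by simp [hq2 hx]⟩
        · exact Or.inl ⟨q2, fun x hx => by simp [hq2 hx]⟩
    · have hadj : (G.deleteEdges {e}).Adj a c := by
        rw [deleteEdges_adj]; exact ⟨hac, by simpa using he⟩
      rcases ih with ⟨q, hq⟩ | ⟨u, v, huv, ⟨q1, hq1⟩, q2, hq2⟩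
      · refine Or.inl ⟨Walk.cons hadj q, ?_⟩
        intro x hx
        simp only [Walk.support_cons, List.mem_cons] at hx ⊢
        exact hx.imp id (fun h => hq h)
      · refine Or.inr ⟨u, v, huv, ⟨Walk.cons hadj q1, ?_⟩, q2, fun x hx => by simp [hq2 hx]⟩
        intro x hx
        simp only [Walk.support_cons, List.mem_cons] at hx ⊢
        exact hx.imp id (fun h => hq1 h)

theorem menger_half {G : SimpleGraph V} {X Y S Z : Set V} {u v b : V}
    (hS : WSep (G.deleteEdges {s(u, v)}) X Y S)
    (hb : b ∈ Y) (q : (G.deleteEdges {s(u, v)}).Walk v b) (hq : ∀ z ∈ q.support, z ∉ S)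
    (hZ : WSep (G.deleteEdges {s(u, v)}) X (insert u S) Z) : WSep G X Y Z := by
  classical
  intro a ha c hc p
  rcases walk_split s(u, v) p with ⟨q', hq'⟩ | ⟨u', v', huv, ⟨q1, hq1⟩, q2, hq2⟩
  · obtain ⟨s, hs, hsq⟩ := hS a ha c hc q'
    obtain ⟨z, hz, hzq⟩ := hZ a ha s (Or.inr hs) (q'.takeUntil s hsq)
    exact ⟨z, hz, hq' (Walk.support_takeUntil_subset_support _ _ hzq)⟩
  · rcases Sym2.eq_iff.1 huv with ⟨rfl, rfl⟩ | ⟨rfl, rfl⟩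
    · obtain ⟨z, hz, hzq⟩ := hZ a ha u' (Or.inl rfl) q1
      exact ⟨z, hz, hq1 hzq⟩
    · obtain ⟨s, hs, hsq⟩ := hS a ha b hb (q1.append q)
      rw [Walk.mem_support_append_iff] at hsq
      rcases hsq with hsq | hsq
      · obtain ⟨z, hz, hzq⟩ := hZ a ha s (Or.inr hs) (q1.takeUntil s hsq)
        exact ⟨z, hz, hq1 (Walk.support_takeUntil_subset_support _ _ hzq)⟩
      · exact absurd hs (hq s hsq)

theorem WLk.mono {G G' : SimpleGraph V} {X X' Y Y' : Set V} {k : ℕ} (hG : G ≤ G') (hX : X ⊆ X')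
    (hY : Y ⊆ Y') (h : WLk G X Y k) : WLk G' X' Y' k := by
  obtain ⟨P, hP, hd⟩ := h
  refine ⟨fun i => ⟨(P i).1, (P i).2.1, (P i).2.2.mapLe hG⟩, fun i => ⟨?_, hX (hP i).2.1,
    hY (hP i).2.2⟩, ?_⟩
  · exact (Walk.isPath_mapLe hG).2 (hP i).1
  · intro i j hij w hw hw'
    refine hd hij w ?_ ?_
    · simpa [pkgSupport, Walk.support_mapLe_eq_support] using hw
    · simpa [pkgSupport, Walk.support_mapLe_eq_support] using hw'

theorem menger_fin (n : ℕ) : ∀ (G : SimpleGraph V) (X Y : Set V), G.edgeSet.Finite →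
    G.edgeSet.ncard = n → ∀ k : ℕ, (∀ Z : Finset V, WSep G X Y Z → k ≤ Z.card) → WLk G X Y k := by
  classical
  induction n using Nat.strong_induction_on with
  | _ n ih =>
  intro G X Y hfin hn k hk
  by_cases hne : G.edgeSet.Nonempty
  swap
  · -- no edges
    have hbot : ∀ a b, ¬ G.Adj a b := fun a b hab => hne ⟨s(a, b), hab⟩
    have hT : ∃ T : Finset V, (T : Set V) ⊆ X ∩ Y ∧ T.card = k := by
      by_cases hXY : (X ∩ Y).Finite
      · have h1 : k ≤ hXY.toFinset.card := by
          apply hk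
          intro x hx y hy p
          cases p with
          | nil => exact ⟨x, by simp [hx, hy], by simp⟩
          | cons h _ => exact absurd h (hbot _ _)
        obtain ⟨T, hT, hc⟩ := Finset.exists_subset_card_eq h1
        refine ⟨T, ?_, hc⟩
        intro x hx
        have := hT hx
        simpa using this
      · obtain ⟨T, h1, h2⟩ := Set.Infinite.exists_subset_card_eq hXY k
        exact ⟨T, h1, h2⟩
    obtain ⟨T, hTs, hTc⟩ := hT
    refine lk_of_sets T hTc (fun t => {t}) ?_ ?_
    · intro t ht
      exact ⟨t, (hTs ht).1, t, (hTs ht).2, Walk.nil, by simp⟩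
    · intro t _ t' _ hne; simpa using hne
  obtain ⟨e, he⟩ := hne
  have hlt : (G.deleteEdges {e}).edgeSet.ncard < n := by
    rw [← hn]
    apply Set.ncard_lt_ncard _ hfin
    rw [edgeSet_deleteEdges]
    exact ⟨Set.sdiff_subset, fun h => (h he).2 rfl⟩
  have hfin' : (G.deleteEdges {e}).edgeSet.Finite :=
    hfin.subset (by rw [edgeSet_deleteEdges]; exact Set.sdiff_subset)
  have hle : G.deleteEdges {e} ≤ G := deleteEdges_le _
  by_cases hk' : ∀ Z : Finset V, WSep (G.deleteEdges {e}) X Y Z → k ≤ Z.card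
  · exact (ih _ hlt _ X Y hfin' rfl k hk').mono hle subset_rfl subset_rfl
  push Not at hk'
  obtain ⟨S, hS, hSk⟩ := hk'
  have hnS : ¬ WSep G X Y S := fun h => by have := hk S h; omega
  unfold WSep at hnS
  push Not at hnS
  obtain ⟨a, ha, b, hb, p, hp⟩ := hnS
  have hpS : ∀ z ∈ p.support, z ∉ (S : Set V) := fun z hz hzS => hp z hzS hz
  rcases walk_split e p with ⟨q, hq⟩ | ⟨u, v, huv, ⟨q1, hq1⟩, q2, hq2⟩
  · obtain ⟨z, hz, hzq⟩ := hS a ha b hb q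
    exact absurd hz (hpS z (hq hzq))
  subst huv
  have huvadj : G.Adj u v := he
  have hP := ih _ hlt _ X ((insert u S : Finset V) : Set V) hfin' rfl k (fun Z hZ => hk Z
    (menger_half hS hb q2 (fun z hz => hpS z (hq2 hz)) (by simpa using hZ)))
  have hQ := ih _ hlt _ Y ((insert v S : Finset V) : Set V) hfin' rfl k (fun Z hZ => hk Z (by
    refine WSep.swap ?_
    have hsym : s(u, v) = s(v, u) := Sym2.eq_swap
    rw [hsym] at hS hZ
    have q1' := q1
    refine menger_half (u := v) (v := u) hS.swap ha
      ((q1.reverse).mapLe (le_of_eq (by rw [hsym]))) ?_ (by simpa using hZ)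
    intro z hz
    rw [Walk.support_mapLe_eq_support] at hz
    exact hpS z (hq1 (by simpa using hz))))
  have hTc : (insert u S).card ≤ k := (Finset.card_insert_le _ _).trans hSk
  have hT'c : (insert v S).card ≤ k := (Finset.card_insert_le _ _).trans hSk
  obtain ⟨A, hA, hAd⟩ := lk_index _ hTc hP
  obtain ⟨B, hB, hBd⟩ := lk_index _ hT'c hQ
  -- cardinalities
  have sepU : WSep G X Y (insert u S : Finset V) := by
    refine menger_half hS hb q2 (fun z hz => hpS z (hq2 hz)) ?_
    intro x _ y hy p
    exact ⟨y, by simpa using hy, by simp⟩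
  have hcu : (insert u S).card = k := le_antisymm hTc (hk _ sepU)
  have huS : u ∉ S := fun h => by
    rw [Finset.insert_eq_of_mem h] at hcu; omega
  have hvS : v ∉ S := fun h => hpS v (hq2 (by simp)) h
  -- crossing claim
  have selfA : ∀ t ∈ insert u S, t ∈ A t := fun t ht => by
    obtain ⟨x, hx, p, hp, hps⟩ := hA t ht
    exact (hps t).1 (by simp)
  have selfB : ∀ t ∈ insert v S, t ∈ B t := fun t ht => by
    obtain ⟨x, hx, p, hp, hps⟩ := hB t ht
    exact (hps t).1 (by simp)
  have cross : ∀ t ∈ insert u S, ∀ s ∈ insert v S, ∀ w, w ∈ A t → w ∈ B s → w ∈ S := by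
    intro t ht s hs w hwA hwB
    by_contra hwS
    obtain ⟨x, hx, p, hp, hps⟩ := hA t ht
    obtain ⟨y, hy, q, hq, hqs⟩ := hB s hs
    have hwp := (hps w).2 hwA
    have hwq := (hqs w).2 hwB
    obtain ⟨z, hz, hzw⟩ := hS x hx y hy ((p.takeUntil w hwp).append (q.takeUntil w hwq).reverse)
    rw [Walk.mem_support_append_iff] at hzw
    rcases hzw with hzw | hzw
    · have hzt : z = t := by
        by_contra hne
        refine Set.disjoint_left.1 (hAd z (by simp [Finset.mem_coe.1 hz]) t ht hne) (selfA z
          (by simp [Finset.mem_coe.1 hz])) ((hps z).1 (Walk.support_takeUntil_subset_support _ _ hzw))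
      subst hzt
      exact Walk.endpoint_notMem_support_takeUntil hp hwp (fun h => hwS (h ▸ hz)) hzw
    · rw [Walk.support_reverse, List.mem_reverse] at hzw
      have hzt : z = s := by
        by_contra hne
        refine Set.disjoint_left.1 (hBd z (by simp [Finset.mem_coe.1 hz]) s hs hne) (selfB z
          (by simp [Finset.mem_coe.1 hz])) ((hqs z).1 (Walk.support_takeUntil_subset_support _ _ hzw))
      subst hzt
      exact Walk.endpoint_notMem_support_takeUntil hq hwq (fun h => hwS (h ▸ hz)) hzw
  let φ : V → V := fun t => if t = u then v else t
  have hφm : ∀ t ∈ insert u S, φ t ∈ insert v S := by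
    intro t ht
    by_cases h : t = u
    · simp [φ, h]
    · simp only [φ, h, if_false]
      rw [Finset.mem_insert] at ht ⊢
      tauto
  have hφi : ∀ t ∈ insert u S, ∀ t' ∈ insert u S, φ t = φ t' → t = t' := by
    intro t ht t' ht' h
    rw [Finset.mem_insert] at ht ht'
    by_cases h1 : t = u <;> by_cases h2 : t' = u
    · rw [h1, h2]
    · simp only [φ, h1, h2, if_true, if_false] at h
      rcases ht' with h' | h'
      · exact absurd h' h2
      · exact absurd (h ▸ h') hvS
    · simp only [φ, h1, h2, if_true, if_false] at h
      rcases ht with h' | h'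
      · exact absurd h' h1
      · exact absurd (h ▸ h') hvS
    · simpa only [φ, h1, h2, if_false] using h
  refine lk_of_sets (insert u S) hcu (fun t => A t ∪ B (φ t)) ?_ ?_
  · intro t ht
    obtain ⟨x, hx, p, hp, hps⟩ := hA t ht
    obtain ⟨y, hy, q, hq, hqs⟩ := hB (φ t) (hφm t ht)
    by_cases h : t = u
    · subst h
      have hv : φ t = v := by simp [φ]
      have hadj : G.Adj t (φ t) := hv ▸ huvadj
      refine ⟨x, hx, y, hy, (p.mapLe hle).append (Walk.cons hadj (q.mapLe hle).reverse), ?_⟩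
      intro w hw
      simp only [Walk.mem_support_append_iff, Walk.support_mapLe_eq_support, Walk.support_cons,
        List.mem_cons, Walk.support_reverse, List.mem_reverse] at hw
      rcases hw with hw | hw | hw
      · exact Or.inl ((hps w).1 hw)
      · subst hw; exact Or.inl (selfA _ ht)
      · exact Or.inr ((hqs w).1 hw)
    · have hv : φ t = t := by simp [φ, h]
      refine ⟨x, hx, y, hy, (p.mapLe hle).append ((q.mapLe hle).reverse.copy hv rfl), ?_⟩
      intro w hw
      simp only [Walk.mem_support_append_iff, Walk.support_mapLe_eq_support, Walk.support_copy,
        Walk.support_reverse, List.mem_reverse] at hw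
      rcases hw with hw | hw
      · exact Or.inl ((hps w).1 hw)
      · exact Or.inr ((hqs w).1 hw)
  · intro t ht t' ht' hne
    have key : ∀ t ∈ insert u S, ∀ t' ∈ insert u S, t ≠ t' → ∀ w, w ∈ A t → w ∉ B (φ t') := by
      intro t ht t' ht' hne w hw hw'
      have hwS := cross t ht _ (hφm t' ht') w hw hw'
      have h1 : w = t := by
        by_contra h
        exact Set.disjoint_left.1 (hAd w (by simp [hwS]) t ht h) (selfA w (by simp [hwS])) hw
      have h2 : w = φ t' := by
        by_contra h
        exact Set.disjoint_left.1 (hBd w (by simp [hwS]) _ (hφm t' ht') h)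
          (selfB w (by simp [hwS])) hw'
      have h3 : φ w = w := by
        have : w ≠ u := fun h => huS (h ▸ hwS)
        simp [φ, this]
      have h4 : w = t' := hφi w (by simp [hwS]) t' ht' (by rw [h3, ← h2])
      exact hne (h1.symm.trans h4)
    rw [Set.disjoint_left]
    rintro w (hw | hw) (hw' | hw')
    · exact Set.disjoint_left.1 (hAd t ht t' ht' hne) hw hw'
    · exact key t ht t' ht' hne w hw hw'
    · exact key t' ht' t ht hne.symm w hw' hw
    · exact Set.disjoint_left.1 (hBd _ (hφm t ht) _ (hφm t' ht')
        (fun h => hne (hφi t ht t' ht' h))) hw hw'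

theorem menger (G : SimpleGraph V) (X Y : Set V) (k : ℕ) :
    WLk G X Y k ∨ ∃ Z : Set V, Z.Finite ∧ Z.ncard < k ∧ WSep G X Y Z := by
  classical
  by_contra hcon
  push Not at hcon
  obtain ⟨hlk, hsep⟩ := hcon
  let GF : Finset V → SimpleGraph V := fun F =>
    { Adj := fun a b => G.Adj a b ∧ a ∈ F ∧ b ∈ F
      symm := ⟨fun a b h => ⟨h.1.symm, h.2.2, h.2.1⟩⟩
      loopless := ⟨fun a h => G.loopless.irrefl a h.1⟩ }
  have hGF : ∀ F, GF F ≤ G := fun F a b h => h.1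
  have hZ : ∀ F : Finset V, ∃ Z : Finset V, Z.card < k ∧ WSep (GF F) (X ∩ F) (Y ∩ F) Z := by
    intro F
    by_contra hno
    push Not at hno
    apply hlk
    have hfin : (GF F).edgeSet.Finite := by
      refine Set.Finite.subset ((F ×ˢ F).image (fun x => s(x.1, x.2))).finite_toSet ?_
      intro e
      induction e with
      | _ a b =>
        intro h
        have h' : (GF F).Adj a b := h
        simp only [Finset.coe_image, Set.mem_image, Finset.mem_coe, Finset.mem_product]
        exact ⟨(a, b), ⟨h'.2.1, h'.2.2⟩, rfl⟩
    refine (menger_fin _ (GF F) (X ∩ F) (Y ∩ F) hfin rfl k ?_).mono (hGF F)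
      Set.inter_subset_left Set.inter_subset_left
    intro Z hZ
    by_contra hlt
    exact hno Z (by omega) hZ
  choose Z hZc hZs using hZ
  let U : Ultrafilter (Finset V) := Ultrafilter.of Filter.atTop
  have hU : (U : Filter (Finset V)) ≤ Filter.atTop := Ultrafilter.of_le _
  let W : Set V := {w | ∀ᶠ F in (U : Filter (Finset V)), w ∈ Z F}
  have hWs : ∀ T : Finset V, (T : Set V) ⊆ W → T.card < k := by
    intro T hT
    have : ∀ᶠ F in (U : Filter (Finset V)), ∀ t ∈ T, t ∈ Z F :=
      (Filter.eventually_all_finset T).2 (fun t ht => hT ht)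
    obtain ⟨F, hF⟩ := this.exists
    exact (Finset.card_le_card hF).trans_lt (hZc F)
  have hWf : W.Finite := by
    by_contra hinf
    obtain ⟨T, hT, hc⟩ := Set.Infinite.exists_subset_card_eq hinf k
    have := hWs T hT
    omega
  have hWc : W.ncard < k := by
    rw [Set.ncard_eq_toFinset_card W hWf]
    exact hWs _ (by simp)
  refine hsep W hWf hWc ?_
  intro x hx y hy p
  have hev : ∀ᶠ F in (U : Filter (Finset V)), p.support.toFinset ⊆ F :=
    hU (Filter.eventually_ge_atTop p.support.toFinset)
  have hw : ∀ F : Finset V, ∀ {a b : V} (q : G.Walk a b), q.support.toFinset ⊆ F →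
      ∃ q' : (GF F).Walk a b, q'.support = q.support := by
    intro F a b q
    induction q with
    | nil => intro _; exact ⟨Walk.nil, rfl⟩
    | @cons a c b h q ih =>
      intro hs
      obtain ⟨q', hq'⟩ := ih (fun z hz => hs (by simp only [List.mem_toFinset] at hz; simp [hz]))
      have hadj : (GF F).Adj a c := ⟨h, hs (by simp), hs (by simp)⟩
      exact ⟨Walk.cons hadj q', by simp [hq']⟩
  have hev2 : ∀ᶠ F in (U : Filter (Finset V)), F ∈ ⋃ w ∈ {w | w ∈ p.support}, {F | w ∈ Z F} := by
    filter_upwards [hev] with F hF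
    obtain ⟨q', hq'⟩ := hw F p hF
    obtain ⟨z, hz, hzq⟩ := hZs F x ⟨hx, hF (by simp)⟩ y ⟨hy, hF (by simp)⟩ q'
    simp only [Set.mem_iUnion, Set.mem_ofPred_eq]
    exact ⟨z, hq' ▸ hzq, hz⟩
  have hfin : {w | w ∈ p.support}.Finite := List.finite_toSet _
  obtain ⟨w, hwp, hwW⟩ := (Ultrafilter.finite_biUnion_mem_iff hfin).1 hev2
  exact ⟨w, hwW, hwp⟩


/-- Any two points of `S` are joined by a walk inside `S`. -/
def ConnIn (G : SimpleGraph V) (S : Set V) : Prop :=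
  ∀ x ∈ S, ∀ y ∈ S, ∃ p : G.Walk x y, ∀ w ∈ p.support, w ∈ S

/-- Vertices `A` attached to disjoint connected blobs `C b`, `b ∈ B`. -/
structure Blobs (G : SimpleGraph V) {κ : Type} (A : Finset V) (C : κ → Set V) (B : Finset κ)
    (Nb : V → Finset κ) : Prop where
  conn : ∀ b ∈ B, ConnIn G (C b)
  disj : ∀ b ∈ B, ∀ b' ∈ B, b ≠ b' → Disjoint (C b) (C b')
  out : ∀ b ∈ B, ∀ a ∈ A, a ∉ C b
  sub : ∀ a ∈ A, Nb a ⊆ B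
  adj : ∀ a ∈ A, ∀ b ∈ Nb a, ∃ u ∈ C b, G.Adj a u

/-- The region occupied by a blob structure. -/
def blobReg {κ : Type} (A : Finset V) (C : κ → Set V) (B : Finset κ) : Set V :=
  {x | x ∈ A ∨ ∃ b ∈ B, x ∈ C b}

/-- A partial topological clique with branch vertices in `A`, inside `R`. -/
def Realize (G : SimpleGraph V) (r : ℕ) (F : Finset (Fin r × Fin r)) (A : Finset V)
    (R : Set V) : Prop :=
  ∃ (f : Fin r → V) (P : Fin r × Fin r → Set V), Function.Injective f ∧ (∀ i, f i ∈ A) ∧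
    (∀ q ∈ F, (∃ p : G.Walk (f q.1) (f q.2), ∀ w ∈ p.support, w ∈ P q) ∧ P q ⊆ R ∧
      ∀ l, f l ∈ P q → l = q.1 ∨ l = q.2) ∧
    ∀ q ∈ F, ∀ q' ∈ F, q ≠ q' → ∀ x ∈ P q, x ∈ P q' →
      (x = f q.1 ∨ x = f q.2) ∧ (x = f q'.1 ∨ x = f q'.2)

theorem Realize.mono {G : SimpleGraph V} {r : ℕ} {F : Finset (Fin r × Fin r)} {A A' : Finset V}
    {R R' : Set V} (h : Realize G r F A R) (hA : A ⊆ A') (hR : R ⊆ R') : Realize G r F A' R' := by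
  obtain ⟨f, P, h1, h2, h3, h4⟩ := h
  exact ⟨f, P, h1, fun i => hA (h2 i), fun q hq => ⟨(h3 q hq).1, (h3 q hq).2.1.trans hR,
    (h3 q hq).2.2⟩, h4⟩

/-- Adding one more connection through the blob `b0`. -/
theorem Realize.insert {G : SimpleGraph V} {r : ℕ} {F : Finset (Fin r × Fin r)} {A : Finset V}
    {R R' S : Set V} (h : Realize G r F A R) (hS : ConnIn G S) (q : Fin r × Fin r) (hq : q ∉ F)
    (hadj : ∀ a ∈ A, ∃ u ∈ S, G.Adj a u) (hdis : Disjoint R S) (hAS : ∀ a ∈ A, a ∉ S)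
    (hR : R ⊆ R') (hAR : ∀ a ∈ A, a ∈ R') (hSR : S ⊆ R') :
    Realize G r (insert q F) A R' := by
  classical
  obtain ⟨f, P, h1, h2, h3, h4⟩ := h
  have key : ∀ q' ∈ F, ∀ x ∈ ({f q.1, f q.2} ∪ S : Set V), x ∈ P q' →
      (x = f q.1 ∨ x = f q.2) ∧ (x = f q'.1 ∨ x = f q'.2) := by
    intro q' hq' x hx hx'
    have hxS : x ∉ S := fun hxS => Set.disjoint_left.1 hdis ((h3 q' hq').2.1 hx') hxS
    have hx1 : x = f q.1 ∨ x = f q.2 := by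
      rcases hx with hx | hx
      · simpa using hx
      · exact absurd hx hxS
    refine ⟨hx1, ?_⟩
    rcases hx1 with rfl | rfl
    · rcases (h3 q' hq').2.2 _ hx' with h | h
      · left; rw [h]
      · right; rw [h]
    · rcases (h3 q' hq').2.2 _ hx' with h | h
      · left; rw [h]
      · right; rw [h]
  refine ⟨f, Function.update P q ({f q.1, f q.2} ∪ S), h1, h2, ?_, ?_⟩
  · intro q' hq'
    by_cases hqq : q' = q
    · subst hqq
      rw [Function.update_self]
      refine ⟨?_, ?_, ?_⟩
      · obtain ⟨u, hu, hau⟩ := hadj _ (h2 q'.1)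
        obtain ⟨v, hv, hav⟩ := hadj _ (h2 q'.2)
        obtain ⟨p, hp⟩ := hS u hu v hv
        refine ⟨Walk.cons hau (p.concat hav.symm), ?_⟩
        intro w hw
        simp only [Walk.support_cons, Walk.support_concat, List.mem_cons, List.mem_append, List.not_mem_nil, or_false] at hw
        rcases hw with rfl | hw | rfl
        · simp
        · exact Or.inr (hp _ hw)
        · simp
      · rintro x (hx | hx)
        · rcases hx with rfl | hx
          · exact hAR _ (h2 _)
          · rw [hx]; exact hAR _ (h2 _)
        · exact hSR hx
      · rintro l (hl | hl)
        · rcases hl with hl | hl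
          · exact Or.inl (h1 hl)
          · exact Or.inr (h1 hl)
        · exact absurd hl (hAS _ (h2 l))
    · have hF : q' ∈ F := by simpa [hqq] using hq'
      rw [Function.update_of_ne hqq]
      exact ⟨(h3 q' hF).1, (h3 q' hF).2.1.trans hR, (h3 q' hF).2.2⟩
  · intro q1 hq1 q2 hq2 hne x hx hx'
    by_cases e1 : q1 = q
    · subst e1
      have e2 : q2 ≠ q1 := fun h => hne h.symm
      have hF : q2 ∈ F := by simpa [e2] using hq2
      rw [Function.update_self] at hx
      rw [Function.update_of_ne e2] at hx'
      exact key q2 hF x hx hx'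
    · have hF1 : q1 ∈ F := by simpa [e1] using hq1
      rw [Function.update_of_ne e1] at hx
      by_cases e2 : q2 = q
      · subst e2
        rw [Function.update_self] at hx'
        exact (key q1 hF1 x hx' hx).symm
      · have hF : q2 ∈ F := by simpa [e2] using hq2
        rw [Function.update_of_ne e2] at hx'
        exact h4 q1 hF1 q2 hF hne x hx hx'

theorem connIn_union {G : SimpleGraph V} {S T : Set V} {a : V} (hS : ConnIn G S) (hT : ConnIn G T)
    (h1 : ∃ u ∈ S, G.Adj a u) (h2 : ∃ u ∈ T, G.Adj a u) : ConnIn G (S ∪ T ∪ {a}) := by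
  have key : ∀ x ∈ S ∪ T ∪ {a}, ∃ p : G.Walk a x, ∀ w ∈ p.support, w ∈ S ∪ T ∪ {a} := by
    rintro x ((hx | hx) | hx)
    · obtain ⟨u, hu, hau⟩ := h1
      obtain ⟨p, hp⟩ := hS u hu x hx
      refine ⟨Walk.cons hau p, ?_⟩
      intro w hw
      rw [Walk.support_cons, List.mem_cons] at hw
      rcases hw with rfl | hw
      · simp
      · exact Or.inl (Or.inl (hp w hw))
    · obtain ⟨u, hu, hau⟩ := h2
      obtain ⟨p, hp⟩ := hT u hu x hx
      refine ⟨Walk.cons hau p, ?_⟩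
      intro w hw
      rw [Walk.support_cons, List.mem_cons] at hw
      rcases hw with rfl | hw
      · simp
      · exact Or.inl (Or.inr (hp w hw))
    · rw [Set.mem_singleton_iff] at hx
      subst hx
      exact ⟨Walk.nil, by simp⟩
  intro x hx y hy
  obtain ⟨p, hp⟩ := key x hx
  obtain ⟨p', hp'⟩ := key y hy
  refine ⟨p.reverse.append p', ?_⟩
  intro w hw
  rw [Walk.mem_support_append_iff] at hw
  rcases hw with hw | hw
  · exact hp w (by simpa using hw)
  · exact hp' w hw

/-- Merging a vertex `a` with two blobs. -/
theorem Blobs.merge [DecidableEq V] {G : SimpleGraph V} {κ : Type} [DecidableEq κ] {A : Finset V} {C : κ → Set V}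
    {B : Finset κ} {Nb : V → Finset κ} (h : Blobs G A C B Nb) {a : V} (ha : a ∈ A) {b b' : κ}
    (hb : b ∈ Nb a) (hb' : b' ∈ Nb a) (hne : b ≠ b') :
    Blobs G (A.erase a) (Function.update C b (C b ∪ C b' ∪ {a})) (B.erase b')
      (fun v => (Nb v).image fun c => if c = b' then b else c) := by
  have hbB := h.sub a ha hb
  have hbB' := h.sub a ha hb'
  have hcase : ∀ c ∈ B.erase b', c ≠ b → Disjoint (C b ∪ C b' ∪ {a}) (C c) := by
    intro c hc hcb
    rw [Finset.mem_erase] at hc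
    rw [Set.disjoint_left]
    rintro x ((hx | hx) | hx) hxc
    · exact Set.disjoint_left.1 (h.disj b hbB c hc.2 hcb.symm) hx hxc
    · exact Set.disjoint_left.1 (h.disj b' hbB' c hc.2 hc.1.symm) hx hxc
    · rw [Set.mem_singleton_iff] at hx
      subst hx
      exact h.out c hc.2 x ha hxc
  constructor
  · intro c hc
    by_cases hcb : c = b
    · subst hcb
      rw [Function.update_self]
      exact connIn_union (h.conn _ hbB) (h.conn _ hbB') (h.adj a ha _ hb) (h.adj a ha _ hb')
    · rw [Function.update_of_ne hcb]
      exact h.conn c (Finset.mem_of_mem_erase hc)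
  · intro c hc c' hc' hcc
    by_cases hcb : c = b
    · subst hcb
      rw [Function.update_self, Function.update_of_ne hcc.symm]
      exact hcase c' hc' hcc.symm
    · rw [Function.update_of_ne hcb]
      by_cases hcb' : c' = b
      · subst hcb'
        rw [Function.update_self]
        exact (hcase c hc hcc).symm
      · rw [Function.update_of_ne hcb']
        exact h.disj c (Finset.mem_of_mem_erase hc) c' (Finset.mem_of_mem_erase hc') hcc
  · intro c hc x hx
    rw [Finset.mem_erase] at hx
    by_cases hcb : c = b
    · subst hcb
      rw [Function.update_self]
      rintro ((hx' | hx') | hx')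
      · exact h.out _ hbB x hx.2 hx'
      · exact h.out _ hbB' x hx.2 hx'
      · exact hx.1 hx'
    · rw [Function.update_of_ne hcb]
      exact h.out c (Finset.mem_of_mem_erase hc) x hx.2
  · intro x hx c hc
    rw [Finset.mem_image] at hc
    obtain ⟨c', hc', rfl⟩ := hc
    have := h.sub x (Finset.mem_of_mem_erase hx) hc'
    split_ifs with hh
    · exact Finset.mem_erase.2 ⟨hne, hbB⟩
    · exact Finset.mem_erase.2 ⟨hh, this⟩
  · intro x hx c hc
    rw [Finset.mem_image] at hc
    obtain ⟨c', hc', rfl⟩ := hc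
    obtain ⟨u, hu, hxu⟩ := h.adj x (Finset.mem_of_mem_erase hx) c' hc'
    refine ⟨u, ?_, hxu⟩
    split_ifs with hh
    · subst hh
      rw [Function.update_self]
      exact Or.inl (Or.inr hu)
    · by_cases hcb : c' = b
      · subst hcb
        rw [Function.update_self]
        exact Or.inl (Or.inl hu)
      · rw [Function.update_of_ne hcb]
        exact hu

theorem merge_card {κ : Type} [DecidableEq κ] (S : Finset κ) {b b' : κ} (hne : b ≠ b') :
    (S.image fun c => if c = b' then b else c).card + (if b ∈ S ∧ b' ∈ S then 1 else 0) = S.card := by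
  by_cases hb' : b' ∈ S
  · by_cases hb : b ∈ S
    · have : (S.image fun c => if c = b' then b else c) = S.erase b' := by
        ext x
        simp only [Finset.mem_image, Finset.mem_erase]
        constructor
        · rintro ⟨c, hc, rfl⟩
          split_ifs with h
          · exact ⟨hne, hb⟩
          · exact ⟨h, hc⟩
        · rintro ⟨hx, hxS⟩
          exact ⟨x, hxS, if_neg hx⟩
      rw [this, if_pos ⟨hb, hb'⟩, Finset.card_erase_add_one hb']
    · rw [if_neg (fun h => hb h.1), Finset.card_image_of_injOn, add_zero]
      intro x hx y hy hxy
      simp only at hxy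
      split_ifs at hxy with h1 h2 h2
      · rw [h1, h2]
      · exact absurd (hxy ▸ hy) hb
      · exact absurd (hxy ▸ hx) hb
      · exact hxy
  · rw [if_neg (fun h => hb' h.2), Finset.card_image_of_injOn, add_zero]
    intro x hx y hy hxy
    simp only at hxy
    rw [if_neg (fun h : x = b' => hb' (h ▸ hx)), if_neg (fun h : y = b' => hb' (h ▸ hy))] at hxy
    exact hxy

/-- The claim proved by induction over `F`. -/
def MaderClaim (r : ℕ) (F : Finset (Fin r × Fin r)) (N K : ℕ) : Prop :=
  ∀ (V : Type u) (G : SimpleGraph V) (κ : Type) (A : Finset V) (C : κ → Set V) (B : Finset κ)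
    (Nb : V → Finset κ), Blobs G A C B Nb → (∀ a ∈ A, N ≤ (Nb a).card) →
    K * B.card < A.card → Realize G r F A (blobReg A C B)

theorem mader_core {r : ℕ} {F : Finset (Fin r × Fin r)} {q : Fin r × Fin r} (hq : q ∉ F)
    {ρ K' : ℕ} (hρ : 1 ≤ ρ) (ih : MaderClaim.{u} r F ρ K') (n : ℕ) :
    ∀ (G : SimpleGraph V) (κ : Type) (A : Finset V) (C : κ → Set V) (B : Finset κ)
    (Nb : V → Finset κ), Blobs G A C B Nb → A.card = n →
    (∀ a ∈ A, (Nb a).card ≤ ρ + (K' + 2) * ρ) →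
    ρ * A.card + (K' + 2) * ((K' + 2) * ρ) * B.card + 1 ≤ ∑ a ∈ A, (Nb a).card →
    Realize G r (insert q F) A (blobReg A C B) := by
  classical
  induction n using Nat.strong_induction_on with
  | _ n IH =>
  intro G κ A C B Nb h hn hdeg he
  by_cases hdel : ∃ a ∈ A, (Nb a).card ≤ ρ
  · obtain ⟨a, ha, had⟩ := hdel
    have hc := Finset.card_erase_add_one ha
    have hs := Finset.add_sum_erase A (fun a => (Nb a).card) ha
    have h' : Blobs G (A.erase a) C B Nb :=
      ⟨h.conn, h.disj, fun b hb x hx => h.out b hb x (Finset.mem_of_mem_erase hx),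
        fun x hx => h.sub x (Finset.mem_of_mem_erase hx),
        fun x hx => h.adj x (Finset.mem_of_mem_erase hx)⟩
    refine (IH (A.erase a).card (by omega) G κ (A.erase a) C B Nb h' rfl
      (fun x hx => hdeg x (Finset.mem_of_mem_erase hx)) ?_).mono (Finset.erase_subset _ _) ?_
    · rw [← hc, mul_add] at he
      omega
    · rintro x (hx | hx)
      · exact Or.inl (Finset.mem_of_mem_erase hx)
      · exact Or.inr hx
  push Not at hdel
  by_cases hmer : ∃ a ∈ A, ∃ b ∈ Nb a, ∃ b' ∈ Nb a, b ≠ b' ∧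
      (Nb a).card + ((A.erase a).filter fun x => b ∈ Nb x ∧ b' ∈ Nb x).card
        ≤ ρ + (K' + 2) * ((K' + 2) * ρ)
  · obtain ⟨a, ha, b, hb, b', hb', hne, hle⟩ := hmer
    have hc := Finset.card_erase_add_one ha
    have hbB := h.sub a ha hb
    have hbB' := h.sub a ha hb'
    have hcB := Finset.card_erase_add_one hbB'
    have hs := Finset.add_sum_erase A (fun a => (Nb a).card) ha
    have hs2 : ∑ x ∈ A.erase a, ((Nb x).image fun c => if c = b' then b else c).card
        + ((A.erase a).filter fun x => b ∈ Nb x ∧ b' ∈ Nb x).card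
        = ∑ x ∈ A.erase a, (Nb x).card := by
      rw [Finset.card_filter, ← Finset.sum_add_distrib]
      exact Finset.sum_congr rfl fun x _ => merge_card (Nb x) hne
    refine (IH (A.erase a).card (by omega) G κ _ _ _ _ (h.merge ha hb hb' hne) rfl
      ?_ ?_).mono (Finset.erase_subset _ _) ?_
    · intro x hx
      exact Finset.card_image_le.trans (hdeg x (Finset.mem_of_mem_erase hx))
    · rw [← hc, ← hcB, mul_add, mul_add] at he
      omega
    · rintro x (hx | ⟨c, hc, hx⟩)
      · exact Or.inl (Finset.mem_of_mem_erase hx)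
      · by_cases hcb : c = b
        · subst hcb
          rw [Function.update_self] at hx
          rcases hx with (hx | hx) | hx
          · exact Or.inr ⟨_, hbB, hx⟩
          · exact Or.inr ⟨_, hbB', hx⟩
          · rw [Set.mem_singleton_iff] at hx
            subst hx
            exact Or.inl ha
        · rw [Function.update_of_ne hcb] at hx
          exact Or.inr ⟨c, Finset.mem_of_mem_erase hc, hx⟩
  push Not at hmer
  obtain ⟨a0, ha0⟩ : A.Nonempty := by
    rw [Finset.nonempty_iff_ne_empty]
    rintro rfl
    simp at he
  obtain ⟨b0, hb0⟩ : (Nb a0).Nonempty := by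
    rw [← Finset.card_pos]
    have := hdel a0 ha0
    omega
  have hb0B := h.sub a0 ha0 hb0
  set A0 := A.filter fun x => b0 ∈ Nb x with hA0
  set B0 := A0.biUnion fun x => (Nb x).erase b0 with hB0
  have hA0A : A0 ⊆ A := Finset.filter_subset _ _
  have hB0B : B0 ⊆ B := by
    intro b hb
    simp only [hB0, Finset.mem_biUnion, Finset.mem_erase] at hb
    obtain ⟨x, hx, hxb⟩ := hb
    exact h.sub x (hA0A hx) hxb.2
  have hb0n : b0 ∉ B0 := by
    intro hb
    simp [hB0] at hb
  have h' : Blobs G A0 C B0 (fun x => (Nb x).erase b0) :=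
    ⟨fun b hb => h.conn b (hB0B hb), fun b hb b' hb' => h.disj b (hB0B hb) b' (hB0B hb'),
      fun b hb x hx => h.out b (hB0B hb) x (hA0A hx),
      fun x hx => Finset.subset_biUnion_of_mem (fun x => (Nb x).erase b0) hx,
      fun x hx b hb => h.adj x (hA0A hx) b (Finset.mem_of_mem_erase hb)⟩
  have hcount : ((K' + 1) * ((K' + 2) * ρ) + 1) * B0.card
      ≤ (ρ + (K' + 2) * ρ) * A0.card := by
    have h1 : ∀ b ∈ B0, (K' + 1) * ((K' + 2) * ρ) + 1
        ≤ (A0.filter fun x => b ∈ (Nb x).erase b0).card := by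
      intro b hb
      simp only [hB0, Finset.mem_biUnion, Finset.mem_erase] at hb
      obtain ⟨x, hx, hxb⟩ := hb
      have hx2 : b0 ∈ Nb x := (Finset.mem_filter.1 hx).2
      have h2 := hmer x (hA0A hx) b0 hx2 b hxb.2 (Ne.symm hxb.1)
      have h3 := hdeg x (hA0A hx)
      have h4 : ((A.erase x).filter fun y => b0 ∈ Nb y ∧ b ∈ Nb y).card
          ≤ (A0.filter fun x => b ∈ (Nb x).erase b0).card := by
        apply Finset.card_le_card
        intro y hy
        simp only [Finset.mem_filter, Finset.mem_erase, hA0] at hy ⊢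
        exact ⟨⟨hy.1.2, hy.2.1⟩, hxb.1, hy.2.2⟩
      have h5 : (K' + 2) * ((K' + 2) * ρ) = (K' + 1) * ((K' + 2) * ρ) + (K' + 2) * ρ := by ring
      omega
    calc ((K' + 1) * ((K' + 2) * ρ) + 1) * B0.card
        = ∑ b ∈ B0, ((K' + 1) * ((K' + 2) * ρ) + 1) := by
          rw [Finset.sum_const, smul_eq_mul, mul_comm]
      _ ≤ ∑ b ∈ B0, (A0.filter fun x => b ∈ (Nb x).erase b0).card := Finset.sum_le_sum h1
      _ = ∑ x ∈ A0, (B0.filter fun b => b ∈ (Nb x).erase b0).card := by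
          simp only [Finset.card_filter]
          exact Finset.sum_comm
      _ ≤ ∑ x ∈ A0, (ρ + (K' + 2) * ρ) := by
          apply Finset.sum_le_sum
          intro x hx
          refine le_trans (Finset.card_le_card ?_) (hdeg x (hA0A hx))
          intro b hb
          exact Finset.mem_of_mem_erase (Finset.mem_filter.1 hb).2
      _ = _ := by rw [Finset.sum_const, smul_eq_mul, mul_comm]
  have hlt : K' * B0.card < A0.card := by
    have hA0pos : 0 < A0.card := Finset.card_pos.2 ⟨a0, Finset.mem_filter.2 ⟨ha0, hb0⟩⟩
    by_contra hcon
    push Not at hcon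
    have h1 : (ρ + (K' + 2) * ρ) * A0.card ≤ (ρ + (K' + 2) * ρ) * (K' * B0.card) :=
      Nat.mul_le_mul_left _ hcon
    have h2 : 0 < B0.card := by
      rcases Nat.eq_zero_or_pos B0.card with h0 | h0
      · rw [h0] at hcon; omega
      · exact h0
    nlinarith
  refine (((ih V G κ A0 C B0 _ h' ?_ hlt).insert (h.conn b0 hb0B) q hq (R' := blobReg A C B) ?_ ?_ ?_ ?_ ?_ ?_).mono
    hA0A le_rfl)
  · intro x hx
    have := hdel x (hA0A hx)
    rw [Finset.card_erase_of_mem (Finset.mem_filter.1 hx).2]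
    omega
  · intro x hx
    exact h.adj x (hA0A hx) b0 (Finset.mem_filter.1 hx).2
  · rw [Set.disjoint_left]
    rintro x (hx | ⟨b, hb, hx⟩) hx'
    · exact h.out b0 hb0B x (hA0A hx) hx'
    · exact Set.disjoint_left.1 (h.disj b (hB0B hb) b0 hb0B (fun hh => hb0n (hh ▸ hb))) hx hx'
  · exact fun a ha => h.out b0 hb0B a (hA0A ha)
  · rintro x (hx | ⟨b, hb, hx⟩)
    · exact Or.inl (hA0A hx)
    · exact Or.inr ⟨b, hB0B hb, hx⟩
  · exact fun a ha => Or.inl (hA0A ha)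
  · exact fun x hx => Or.inr ⟨b0, hb0B, hx⟩

theorem mader_claim (r : ℕ) (F : Finset (Fin r × Fin r)) :
    ∃ N K : ℕ, 1 ≤ N ∧ MaderClaim.{u} r F N K := by
  classical
  induction F using Finset.induction_on with
  | empty =>
    refine ⟨r + 1, 1, by omega, ?_⟩
    intro V G κ A C B Nb h hN hK
    have hr : r ≤ A.card := by
      obtain ⟨a, ha⟩ : A.Nonempty := Finset.card_pos.1 (by omega)
      have h1 := hN a ha
      have h2 := Finset.card_le_card (h.sub a ha)
      omega
    obtain ⟨s, hs, hsc⟩ := Finset.exists_subset_card_eq hr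
    let e := (s.equivFinOfCardEq hsc).symm
    refine ⟨fun i => e i, fun _ => ∅, ?_, fun i => hs (e i).2, by simp, by simp⟩
    intro i j hij
    exact e.injective (Subtype.ext hij)
  | insert q F hq ih =>
    obtain ⟨ρ, K', hρ, ih⟩ := ih
    refine ⟨ρ + (K' + 2) * ρ, K' + 2, by omega, ?_⟩
    intro V G κ A C B Nb h hN hK
    have : ∀ a : V, ∃ s ⊆ Nb a, a ∈ A → s.card = ρ + (K' + 2) * ρ := by
      intro a
      by_cases ha : a ∈ A
      · obtain ⟨s, hs, hsc⟩ := Finset.exists_subset_card_eq (hN a ha)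
        exact ⟨s, hs, fun _ => hsc⟩
      · exact ⟨∅, by simp, fun h => absurd h ha⟩
    choose Nb' hNb' hcard using this
    refine mader_core hq hρ ih A.card G κ A C B Nb' ⟨h.conn, h.disj, h.out,
      fun a ha => (hNb' a).trans (h.sub a ha), fun a ha b hb => h.adj a ha b (hNb' a hb)⟩ rfl
      (fun a ha => (hcard a ha).le) ?_
    rw [Finset.sum_congr rfl hcard, Finset.sum_const, smul_eq_mul]
    have h1 : ((K' + 2) * ρ) * ((K' + 2) * B.card + 1) ≤ ((K' + 2) * ρ) * A.card :=
      Nat.mul_le_mul_left _ hK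
    have h2 : 1 ≤ (K' + 2) * ρ := Nat.mul_pos (by omega) hρ
    nlinarith

/-- Mader type lemma: enough vertices attached to few blobs force a topological clique. -/
theorem mader_lemma (r : ℕ) : ∃ N K : ℕ, 1 ≤ N ∧
    ∀ (V : Type u) (G : SimpleGraph V) (κ : Type) (A : Finset V) (C : κ → Set V) (B : Finset κ)
    (Nb : V → Finset κ), Blobs G A C B Nb → (∀ a ∈ A, N ≤ (Nb a).card) →
    K * B.card < A.card → HasTopKMinor G r := by
  classical
  obtain ⟨N, K, hN, h⟩ := mader_claim.{u} r Finset.univ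
  refine ⟨N, K, hN, ?_⟩
  intro V G κ A C B Nb h1 h2 h3
  obtain ⟨f, P, hf, -, hP, hd⟩ := h V G κ A C B Nb h1 h2 h3
  choose p hp using fun q => (hP q (Finset.mem_univ q)).1
  refine ⟨f, fun i j _ => (p (i, j)).bypass, hf, fun i j _ => Walk.bypass_isPath _, ?_, ?_⟩
  · intro i j hij x hx hxi hxj l hl
    subst hl
    have := (hP (i, j) (Finset.mem_univ _)).2.2 l
      (hp _ _ (Walk.support_bypass_subset_support _ hx))
    rcases this with rfl | rfl
    · exact hxi rfl
    · exact hxj rfl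
  · intro i j hij i' j' hij' hne x hx hx'
    exact hd (i, j) (Finset.mem_univ _) (i', j') (Finset.mem_univ _) hne x
      (hp _ _ (Walk.support_bypass_subset_support _ hx))
      (hp _ _ (Walk.support_bypass_subset_support _ hx'))


open Classical in
/-- The indices of the other blobs adjacent to `v`. -/
noncomputable def nbIdx (G : SimpleGraph V) {m : ℕ} (C : Fin m → Set V) (v : V) (i : Fin m) :
    Finset (Fin m) :=
  Finset.univ.filter fun j => j ≠ i ∧ ∃ u ∈ C j, G.Adj v u

theorem heavy_lemma (r : ℕ) : ∃ T : ℕ, 1 ≤ T ∧ ∀ (V : Type u) (G : SimpleGraph V),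
    ¬ HasTopKMinor G r → ∀ (m : ℕ) (C : Fin m → Set V), (∀ i, ConnIn G (C i)) →
    (Pairwise fun i j => Disjoint (C i) (C j)) → ∀ (I : Finset (Fin m)) (h : Fin m → V),
    (∀ i ∈ I, h i ∈ C i) → (∀ i ∈ I, T ≤ (nbIdx G C (h i) i).card) → 2 * I.card ≤ m := by
  classical
  obtain ⟨N, K, hN, hM⟩ := mader_lemma.{u} r
  set q := 8 * (K + 1) * N with hq
  have hqpos : 1 ≤ q := Nat.mul_pos (by omega) hN
  refine ⟨N + 8 * q, by omega, ?_⟩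
  intro V G hG m C hC hd I h hh hT
  by_contra hcon
  push Not at hcon
  apply hG
  set J : Fin m → Finset (Fin m) := fun i => nbIdx G C (h i) i with hJ
  set s : Finset (Fin m) → ℕ := fun B => ∑ i ∈ I, min ((J i ∩ B).card) N with hs
  obtain ⟨B, hB, hmax⟩ := Finset.exists_max_image
    (Finset.univ.filter fun B : Finset (Fin m) => q * B.card ≤ s B) Finset.card
    ⟨∅, by simp⟩
  simp only [Finset.mem_filter, Finset.mem_univ, true_and] at hB hmax
  have hIm : I.card ≤ m := by simpa using Finset.card_le_univ I
  have hBm : 8 * ((K + 1) * B.card) ≤ m := by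
    have h1 : s B ≤ I.card * N := by
      simp only [hs]
      calc ∑ i ∈ I, min ((J i ∩ B).card) N ≤ ∑ i ∈ I, N :=
            Finset.sum_le_sum fun i _ => min_le_right _ _
        _ = _ := by rw [Finset.sum_const, smul_eq_mul]
    have h2 : N * (8 * ((K + 1) * B.card)) ≤ N * m := by
      calc N * (8 * ((K + 1) * B.card)) = q * B.card := by rw [hq]; ring
        _ ≤ I.card * N := hB.trans h1
        _ ≤ m * N := Nat.mul_le_mul_right _ hIm
        _ = _ := mul_comm _ _
    exact Nat.le_of_mul_le_mul_left h2 hN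
  set U := I.filter fun i => (J i ∩ B).card < N with hU
  have hj : ∀ j, j ∉ B → (U.filter fun i => j ∈ J i).card ≤ q := by
    intro j hjB
    by_contra hlt
    push Not at hlt
    have h1 : s B + (U.filter fun i => j ∈ J i).card ≤ s (insert j B) := by
      have h2 : (U.filter fun i => j ∈ J i).card
          = ∑ i ∈ I, if (J i ∩ B).card < N ∧ j ∈ J i then 1 else 0 := by
        rw [hU, Finset.filter_filter, Finset.card_filter]
      rw [h2]
      simp only [hs]
      rw [← Finset.sum_add_distrib]
      apply Finset.sum_le_sum
      intro i hi
      split_ifs with hc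
      · have : (J i ∩ insert j B).card = (J i ∩ B).card + 1 := by
          rw [Finset.inter_insert_of_mem hc.2, Finset.card_insert_of_notMem]
          simp [hjB]
        omega
      · have : (J i ∩ B).card ≤ (J i ∩ insert j B).card :=
          Finset.card_le_card (Finset.inter_subset_inter_left (Finset.subset_insert _ _))
        omega
    have h3 := hmax (insert j B) (by
      rw [Finset.card_insert_of_notMem hjB, mul_add]
      omega)
    rw [Finset.card_insert_of_notMem hjB] at h3
    omega
  have hUm : 8 * U.card ≤ m := by
    have h1 : ∀ i ∈ U, 8 * q ≤ ((Finset.univ \ B).filter fun j => j ∈ J i).card := by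
      intro i hi
      have h2 := Finset.mem_filter.1 hi
      have h3 := hT i h2.1
      have h4 : (J i).card = (J i ∩ B).card + (J i \ B).card :=
        (Finset.card_inter_add_card_sdiff _ _).symm
      have h5 : (Finset.univ \ B).filter (fun j => j ∈ J i) = J i \ B := by
        ext x; simp [and_comm]
      rw [h5]
      have h6 : (J i).card = (nbIdx G C (h i) i).card := rfl
      omega
    have h2 : q * (8 * U.card) ≤ q * m := by
      calc q * (8 * U.card) = ∑ i ∈ U, 8 * q := by rw [Finset.sum_const, smul_eq_mul]; ring
        _ ≤ ∑ i ∈ U, ((Finset.univ \ B).filter fun j => j ∈ J i).card := Finset.sum_le_sum h1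
        _ = ∑ j ∈ Finset.univ \ B, (U.filter fun i => j ∈ J i).card := by
            simp only [Finset.card_filter]
            exact Finset.sum_comm
        _ ≤ ∑ j ∈ Finset.univ \ B, q := Finset.sum_le_sum fun j hj' => hj j (by simpa using hj')
        _ ≤ ∑ j : Fin m, q := Finset.sum_le_sum_of_subset (Finset.subset_univ _)
        _ = q * m := by simp [mul_comm]
    exact Nat.le_of_mul_le_mul_left h2 hqpos
  have hinj : Set.InjOn h (((I \ U) \ B : Finset (Fin m)) : Set (Fin m)) := by
    intro i hi j hj' hij
    by_contra hne
    simp only [Finset.coe_sdiff, Set.mem_sdiff, Finset.mem_coe] at hi hj'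
    exact Set.disjoint_left.1 (hd hne) (hh i hi.1.1) (hij ▸ hh j hj'.1.1)
  refine hM V G (Fin m) (((I \ U) \ B).image h) C B
    (fun v => B.filter fun b => ∃ u ∈ C b, G.Adj v u) ⟨fun b _ => hC b, fun b _ b' _ hne => hd hne,
      ?_, fun _ _ => Finset.filter_subset _ _, fun a _ b hb => (Finset.mem_filter.1 hb).2⟩ ?_ ?_
  · intro b hb a ha hab
    simp only [Finset.mem_image, Finset.mem_sdiff] at ha
    obtain ⟨i, hi, rfl⟩ := ha
    have : i ≠ b := fun hib => hi.2 (hib ▸ hb)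
    exact Set.disjoint_left.1 (hd this) (hh i hi.1.1) hab
  · intro a ha
    simp only [Finset.mem_image, Finset.mem_sdiff] at ha
    obtain ⟨i, hi, rfl⟩ := ha
    have h1 : N ≤ (J i ∩ B).card := by
      by_contra hlt
      exact hi.1.2 (Finset.mem_filter.2 ⟨hi.1.1, not_le.1 hlt⟩)
    refine h1.trans (Finset.card_le_card ?_)
    intro j hj'
    rw [Finset.mem_inter] at hj'
    have h2 := hj'.1
    simp only [hJ, nbIdx, Finset.mem_filter, Finset.mem_univ, true_and] at h2
    exact Finset.mem_filter.2 ⟨hj'.2, h2.2⟩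
  · rw [Finset.card_image_of_injOn hinj]
    have h1 := Finset.le_card_sdiff U I
    have h2 := Finset.le_card_sdiff B (I \ U)
    have h3 : (K + 1) * B.card = K * B.card + B.card := by ring
    omega

/-- `T` is a good constant for `G`. -/
def HeavyC (G : SimpleGraph V) (T : ℕ) : Prop :=
  ∀ (m : ℕ) (C : Fin m → Set V), (∀ i, ConnIn G (C i)) →
    (Pairwise fun i j => Disjoint (C i) (C j)) → ∀ (I : Finset (Fin m)) (h : Fin m → V),
    (∀ i ∈ I, h i ∈ C i) → (∀ i ∈ I, T ≤ (nbIdx G C (h i) i).card) → 2 * I.card ≤ m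

open Classical in
theorem HeavyC.degen {G : SimpleGraph V} {T : ℕ} (hT : HeavyC G T) (U : Finset V)
    (hU : U.Nonempty) : ∃ v ∈ U, (U.filter fun w => G.Adj v w).card < T := by
  by_contra hcon
  push Not at hcon
  let e := U.equivFin.symm
  have h1 := hT U.card (fun i => {(e i : V)}) ?_ ?_ Finset.univ (fun i => e i) ?_ ?_
  · have := Finset.card_pos.2 hU
    simp at h1
    omega
  · intro i x hx y hy
    rw [Set.mem_singleton_iff] at hx hy
    subst hx
    subst hy
    exact ⟨Walk.nil, by simp⟩
  · intro i j hij
    rw [Set.disjoint_singleton]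
    exact fun h => hij (e.injective (Subtype.ext h))
  · intro i _
    rfl
  · intro i _
    refine (hcon (e i) (e i).2).trans ?_
    apply Finset.card_le_card_of_injOn (fun w => if hw : w ∈ U then e.symm ⟨w, hw⟩ else i)
    · intro w hw
      simp only [Finset.coe_filter, Set.mem_ofPred_eq] at hw
      simp only [hw.1, dif_pos, nbIdx, Finset.coe_filter, Finset.mem_univ, true_and, Set.mem_ofPred_eq]
      refine ⟨?_, w, ?_, hw.2⟩
      · intro h
        rw [← h] at hw
        simp at hw
      · simp
    · intro w hw w' hw' hww
      simp only [Finset.coe_filter, Set.mem_ofPred_eq] at hw hw'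
      simp only [hw.1, hw'.1, dif_pos] at hww
      exact congrArg Subtype.val (e.symm.injective hww)


theorem exists_enum (N : Finset V) (d : ℕ) (hN : N.card ≤ d) (v : V) :
    ∃ g : Fin d → V, ∀ w ∈ N, ∃ j, g j = w := by
  classical
  refine ⟨fun j => if h : j.1 < N.card then (N.equivFin.symm ⟨j.1, h⟩ : V) else v, ?_⟩
  intro w hw
  refine ⟨⟨(N.equivFin ⟨w, hw⟩).1, lt_of_lt_of_le (N.equivFin ⟨w, hw⟩).2 hN⟩, ?_⟩
  simp

open Classical in
theorem degen_color (H : SimpleGraph V) (d n : ℕ) : ∀ (S : Finset V), S.card = n →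
    (∀ U ⊆ S, U.Nonempty → ∃ v ∈ U, (U.filter fun w => H.Adj v w).card ≤ d) →
    ∃ (col : V → Fin (d + 1)) (f : Fin d → V → V),
      (∀ u ∈ S, ∀ v ∈ S, H.Adj u v → col u ≠ col v) ∧
      ∀ u ∈ S, ∀ v ∈ S, H.Adj u v → ∃ j, f j u = v ∨ f j v = u := by
  induction n with
  | zero =>
    intro S hS _
    rw [Finset.card_eq_zero] at hS
    subst hS
    exact ⟨fun _ => 0, fun _ v => v, by simp, by simp⟩
  | succ n ih =>
    intro S hS h
    obtain ⟨v, hv, hvd⟩ := h S subset_rfl (Finset.card_pos.1 (by omega))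
    obtain ⟨col, f, hcol, hf⟩ := ih (S.erase v) (by rw [Finset.card_erase_of_mem hv]; omega)
      (fun U hU => h U (hU.trans (Finset.erase_subset _ _)))
    obtain ⟨g, hg⟩ := exists_enum _ d hvd v
    obtain ⟨c, hc⟩ : ∃ c : Fin (d + 1), c ∉ (S.filter fun w => H.Adj v w).image col := by
      by_contra hcon
      push Not at hcon
      have h1 : (Finset.univ : Finset (Fin (d + 1))).card ≤
          ((S.filter fun w => H.Adj v w).image col).card :=
        Finset.card_le_card fun c _ => hcon c
      have h2 := h1.trans Finset.card_image_le
      simp only [Finset.card_univ, Fintype.card_fin] at h2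
      omega
    have hc' : ∀ w ∈ S, H.Adj v w → c ≠ col w := by
      intro w hw hvw hcw
      exact hc (Finset.mem_image.2 ⟨w, Finset.mem_filter.2 ⟨hw, hvw⟩, hcw.symm⟩)
    refine ⟨Function.update col v c, fun j => Function.update (f j) v (g j), ?_, ?_⟩
    · intro x hx y hy hxy
      by_cases hxv : x = v
      · subst hxv
        rw [Function.update_self, Function.update_of_ne hxy.ne']
        exact hc' y hy hxy
      · rw [Function.update_of_ne hxv]
        by_cases hyv : y = v
        · subst hyv
          rw [Function.update_self]
          exact (hc' x hx hxy.symm).symm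
        · rw [Function.update_of_ne hyv]
          exact hcol x (Finset.mem_erase.2 ⟨hxv, hx⟩) y (Finset.mem_erase.2 ⟨hyv, hy⟩) hxy
    · intro x hx y hy hxy
      by_cases hxv : x = v
      · subst hxv
        obtain ⟨j, hj⟩ := hg y (Finset.mem_filter.2 ⟨hy, hxy⟩)
        exact ⟨j, Or.inl (by beta_reduce; rw [Function.update_self, hj])⟩
      · by_cases hyv : y = v
        · subst hyv
          obtain ⟨j, hj⟩ := hg x (Finset.mem_filter.2 ⟨hx, hxy.symm⟩)
          exact ⟨j, Or.inr (by beta_reduce; rw [Function.update_self, hj])⟩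
        · obtain ⟨j, hj⟩ := hf x (Finset.mem_erase.2 ⟨hxv, hx⟩) y (Finset.mem_erase.2 ⟨hyv, hy⟩) hxy
          exact ⟨j, by beta_reduce; rwa [Function.update_of_ne hxv, Function.update_of_ne hyv]⟩

open Classical in
/-- The weighted degree of `v` in `Q`. -/
noncomputable def wdeg (G : SimpleGraph V) (X Y : Set V) (Q : Finset V) (v : V) : ℕ :=
  (Q.filter fun w => G.Adj v w).card + (if v ∈ X then 1 else 0) + (if v ∈ Y then 1 else 0)

/-- A link inside `Q`. -/
def HasLink (G : SimpleGraph V) (X Y : Set V) (Q : Finset V) : Prop :=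
  ∃ x ∈ X, ∃ y ∈ Y, ∃ p : G.Walk x y, ∀ w ∈ p.support, w ∈ Q

/-- `Q` is the vertex set of a nice link. -/
def NLink (G : SimpleGraph V) (X Y : Set V) (Q : Finset V) : Prop :=
  (∃ x ∈ X, ∃ y ∈ Y, ∃ p : G.Walk x y, p.IsPath ∧ ∀ w, w ∈ p.support ↔ w ∈ Q) ∧
    ∀ v ∈ Q, wdeg G X Y Q v = 2

theorem HasLink.nice {G : SimpleGraph V} {X Y : Set V} {A : Finset V} (h : HasLink G X Y A) :
    ∃ Q ⊆ A, NLink G X Y Q := by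
  classical
  have hex : ∃ n : ℕ, ∃ x ∈ X, ∃ y ∈ Y, ∃ p : G.Walk x y, (∀ w ∈ p.support, w ∈ A) ∧ p.length = n := by
    obtain ⟨x, hx, y, hy, p, hp⟩ := h
    exact ⟨_, x, hx, y, hy, p, hp, rfl⟩
  obtain ⟨x, hx, y, hy, p, hp, hlen⟩ := Nat.find_spec hex
  have hmin : ∀ x' ∈ X, ∀ y' ∈ Y, ∀ p' : G.Walk x' y', (∀ w ∈ p'.support, w ∈ A) →
      p.length ≤ p'.length := by
    intro x' hx' y' hy' p' hp'
    rw [hlen]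
    exact Nat.find_min' hex ⟨x', hx', y', hy', p', hp', rfl⟩
  have htake : ∀ i, ∀ w ∈ (p.take i).support, w ∈ A := fun i w hw =>
    hp w ((p.isSubwalk_take i).support_subset hw)
  have hdrop : ∀ i, ∀ w ∈ (p.drop i).support, w ∈ A := fun i w hw =>
    hp w ((p.isSubwalk_drop i).support_subset hw)
  have hX : ∀ i ≤ p.length, p.getVert i ∈ X → i = 0 := by
    intro i hi hiX
    have := hmin _ hiX y hy (p.drop i) (hdrop i)
    rw [Walk.drop_length] at this
    omega
  have hY : ∀ i ≤ p.length, p.getVert i ∈ Y → i = p.length := by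
    intro i hi hiY
    have := hmin x hx _ hiY (p.take i) (htake i)
    rw [Walk.take_length] at this
    omega
  have hinj : ∀ i j, i < j → j ≤ p.length → p.getVert i ≠ p.getVert j := by
    intro i j hij hj he
    have := hmin x hx y hy (((p.take i).copy rfl he).append (p.drop j)) (by
      intro w hw
      rw [Walk.mem_support_append_iff] at hw
      rcases hw with hw | hw
      · rw [Walk.support_copy] at hw
        exact htake i w hw
      · exact hdrop j w hw)
    rw [Walk.length_append, Walk.length_copy, Walk.take_length, Walk.drop_length] at this
    omega
  have hadj : ∀ i j, i < j → j ≤ p.length → G.Adj (p.getVert i) (p.getVert j) → j = i + 1 := by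
    intro i j hij hj he
    have := hmin x hx y hy ((p.take i).append (Walk.cons he (p.drop j))) (by
      intro w hw
      rw [Walk.mem_support_append_iff] at hw
      rcases hw with hw | hw
      · exact htake i w hw
      · rw [Walk.support_cons, List.mem_cons] at hw
        rcases hw with rfl | hw
        · exact hp _ (Walk.getVert_mem_support _ _)
        · exact hdrop j w hw)
    rw [Walk.length_append, Walk.length_cons, Walk.take_length, Walk.drop_length] at this
    omega
  have hpath : p.IsPath := by
    rw [Walk.isPath_def, List.nodup_iff_injective_get]
    intro a b hab
    have ha : a.1 ≤ p.length := by have h1 := a.2; have h2 := p.length_support; omega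
    have hb : b.1 ≤ p.length := by have h1 := b.2; have h2 := p.length_support; omega
    have hab' : p.getVert a.1 = p.getVert b.1 := by
      rw [Walk.getVert_eq_support_getElem p ha, Walk.getVert_eq_support_getElem p hb]
      exact hab
    rcases lt_trichotomy a.1 b.1 with h1 | h1 | h1
    · exact absurd hab' (hinj _ _ h1 hb)
    · exact Fin.ext h1
    · exact absurd hab'.symm (hinj _ _ h1 ha)
  refine ⟨p.support.toFinset, ?_, ⟨x, hx, y, hy, p, hpath, by simp⟩, ?_⟩
  · intro w hw
    exact hp w (by simpa using hw)
  · intro v hv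
    rw [List.mem_toFinset, Walk.mem_support_iff_exists_getVert] at hv
    obtain ⟨i, rfl, hi⟩ := hv
    have hN : (p.support.toFinset.filter fun w => G.Adj (p.getVert i) w)
        = (if i = 0 then ∅ else {p.getVert (i - 1)}) ∪
          (if i = p.length then ∅ else {p.getVert (i + 1)}) := by
      ext w
      rw [Finset.mem_filter, List.mem_toFinset, Walk.mem_support_iff_exists_getVert,
        Finset.mem_union]
      constructor
      · rintro ⟨⟨j, rfl, hj⟩, ha⟩
        rcases lt_trichotomy i j with h1 | h1 | h1
        · have := hadj i j h1 hj ha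
          subst this
          right
          rw [if_neg (by omega)]
          simp
        · subst h1
          exact absurd ha (G.irrefl)
        · have := hadj j i h1 hi ha.symm
          subst this
          left
          rw [if_neg (by omega)]
          simp
      · rintro (hw | hw)
        · split_ifs at hw with h1
          · simp at hw
          · rw [Finset.mem_singleton] at hw
            subst hw
            refine ⟨⟨i - 1, rfl, by omega⟩, ?_⟩
            have := p.adj_getVert_succ (i := i - 1) (by omega)
            rw [Nat.sub_add_cancel (by omega)] at this
            exact this.symm
        · split_ifs at hw with h1
          · simp at hw
          · rw [Finset.mem_singleton] at hw
            subst hw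
            exact ⟨⟨i + 1, rfl, by omega⟩, p.adj_getVert_succ (by omega)⟩
    have hXi : p.getVert i ∈ X ↔ i = 0 := ⟨hX i hi, fun h => by rw [h, Walk.getVert_zero]; exact hx⟩
    have hYi : p.getVert i ∈ Y ↔ i = p.length :=
      ⟨hY i hi, fun h => by rw [h, Walk.getVert_length]; exact hy⟩
    rw [wdeg]
    simp only [hXi, hYi]
    rw [hN, Finset.card_union_of_disjoint]
    · split_ifs <;> simp
    · split_ifs with h1 h2 h2
      · simp
      · simp
      · simp
      · rw [Finset.disjoint_singleton]
        exact hinj _ _ (by omega) (by omega)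

/-- Quotient graph. -/
def quoGraph (G : SimpleGraph V) (S : Finset V) (π : V → V) : SimpleGraph V where
  Adj u v := u ≠ v ∧ ∃ a ∈ S, ∃ b ∈ S, π a = u ∧ π b = v ∧ G.Adj a b
  symm := ⟨by
    rintro u v ⟨h, a, ha, b, hb, h1, h2, h3⟩
    exact ⟨h.symm, b, hb, a, ha, h2, h1, h3.symm⟩⟩
  loopless := ⟨fun v h => h.1 rfl⟩

theorem quo_walk {G : SimpleGraph V} {S : Finset V} {π : V → V} {x y : V} (p : G.Walk x y)
    (hp : ∀ w ∈ p.support, w ∈ S) : ∃ q : (quoGraph G S π).Walk (π x) (π y),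
      ∀ w ∈ q.support, ∃ w' ∈ p.support, π w' = w := by
  induction p with
  | nil => exact ⟨Walk.nil, by simp⟩
  | @cons u v w h p ih =>
    obtain ⟨q, hq⟩ := ih (fun w hw => hp w (by simp [hw]))
    by_cases he : π u = π v
    · refine ⟨q.copy he.symm rfl, ?_⟩
      intro z hz
      rw [Walk.support_copy] at hz
      obtain ⟨w', hw', h'⟩ := hq z hz
      exact ⟨w', by simp [hw'], h'⟩
    · have ha : (quoGraph G S π).Adj (π u) (π v) :=
        ⟨he, u, hp u (by simp), v, hp v (by simp), rfl, rfl, h⟩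
      refine ⟨Walk.cons ha q, ?_⟩
      intro z hz
      rw [Walk.support_cons, List.mem_cons] at hz
      rcases hz with rfl | hz
      · exact ⟨u, by simp, rfl⟩
      · obtain ⟨w', hw', h'⟩ := hq z hz
        exact ⟨w', by simp [hw'], h'⟩

theorem fibre_walk {G : SimpleGraph V} {S : Finset V} {π : V → V}
    (hπ : ∀ v ∈ S, π v ∈ S ∧ π (π v) = π v ∧ (π v = v ∨ G.Adj v (π v))) {a b : V} (ha : a ∈ S)
    (hb : b ∈ S) (hab : π a = π b) : ∃ p : G.Walk a b, ∀ w ∈ p.support, w ∈ S ∧ π w = π a := by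
  have key : ∀ a ∈ S, ∃ p : G.Walk a (π a), ∀ w ∈ p.support, w ∈ S ∧ π w = π a := by
    intro a ha
    obtain ⟨h1, h2, h3⟩ := hπ a ha
    rcases h3 with h3 | h3
    · refine ⟨Walk.nil.copy rfl h3.symm, ?_⟩
      intro w hw
      simp at hw
      subst hw
      exact ⟨ha, rfl⟩
    · refine ⟨Walk.cons h3 Walk.nil, ?_⟩
      intro w hw
      simp at hw
      rcases hw with rfl | rfl
      · exact ⟨ha, rfl⟩
      · exact ⟨h1, h2⟩
  obtain ⟨p, hp⟩ := key a ha
  obtain ⟨q, hq⟩ := key b hb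
  refine ⟨p.append (q.copy rfl hab.symm).reverse, ?_⟩
  intro w hw
  rw [Walk.mem_support_append_iff] at hw
  rcases hw with hw | hw
  · exact hp w hw
  · rw [hab]
    exact hq w (by simpa using hw)

theorem lift_walk {G : SimpleGraph V} {S : Finset V} {π : V → V}
    (hπ : ∀ v ∈ S, π v ∈ S ∧ π (π v) = π v ∧ (π v = v ∨ G.Adj v (π v))) {u v : V}
    (p : (quoGraph G S π).Walk u v) : ∀ a ∈ S, ∀ b ∈ S, π a = u → π b = v →
    ∃ q : G.Walk a b, ∀ w ∈ q.support, w ∈ S ∧ π w ∈ p.support := by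
  induction p with
  | nil =>
    intro a ha b hb h1 h2
    obtain ⟨q, hq⟩ := fibre_walk hπ ha hb (h1.trans h2.symm)
    refine ⟨q, fun w hw => ⟨(hq w hw).1, ?_⟩⟩
    rw [(hq w hw).2, h1]
    simp
  | cons h p ih =>
    intro a ha b hb h1 h2
    have hh := h
    obtain ⟨hne, a', ha', b', hb', h3, h4, h5⟩ := hh
    obtain ⟨q, hq⟩ := ih b' hb' b hb h4 h2
    obtain ⟨q', hq'⟩ := fibre_walk hπ ha ha' (h1.trans h3.symm)
    refine ⟨q'.append (Walk.cons h5 q), ?_⟩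
    intro w hw
    rw [Walk.mem_support_append_iff, Walk.support_cons, List.mem_cons] at hw
    rcases hw with hw | rfl | hw
    · refine ⟨(hq' w hw).1, ?_⟩
      rw [(hq' w hw).2, h1]
      simp
    · refine ⟨ha', ?_⟩
      rw [Walk.support_cons]
      exact List.mem_cons.2 (Or.inl h3)
    · refine ⟨(hq w hw).1, ?_⟩
      rw [Walk.support_cons]
      exact List.mem_cons_of_mem _ (hq w hw).2

open Classical in
theorem contract_lemma {G : SimpleGraph V} {X Y : Set V} {m m' t : ℕ} (P : Fin m → Finset V)
    (hP : ∀ i, HasLink G X Y (P i)) (S : Finset V) (hS : ∀ i, P i ⊆ S) (π : V → V)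
    (hπ : ∀ v ∈ S, π v ∈ S ∧ π (π v) = π v ∧ (π v = v ∨ G.Adj v (π v)))
    (ht1 : 1 ≤ t)
    (ht : ∀ u, (Finset.univ.filter fun i => ∃ w ∈ P i, π w = u).card ≤ t) (hm : t * m' ≤ m) :
    ∃ Q : Fin m' → Finset V, (∀ i, NLink G X Y (Q i)) ∧ (∀ i, Q i ⊆ S) ∧
      ∀ i j, i ≠ j → ∀ v ∈ Q i, ∀ w ∈ Q j, π v ≠ π w := by
  rcases menger (quoGraph G S π) (π '' (X ∩ S)) (π '' (Y ∩ S)) m' with ⟨R, hR, hd⟩ | ⟨Z, hZf, hZ, hsep⟩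
  · have : ∀ i, ∃ Q ⊆ S.filter fun w => π w ∈ pkgSupport (R i), NLink G X Y Q := by
      intro i
      apply HasLink.nice
      obtain ⟨-, ⟨a, ⟨haX, haS⟩, ha⟩, ⟨b, ⟨hbY, hbS⟩, hb⟩⟩ := hR i
      obtain ⟨q, hq⟩ := lift_walk hπ (R i).2.2 a haS b hbS ha hb
      refine ⟨a, haX, b, hbY, q, fun w hw => ?_⟩
      rw [Finset.mem_filter]
      exact hq w hw
    choose Q hQ hN using this
    refine ⟨Q, hN, fun i => (hQ i).trans (Finset.filter_subset _ _), ?_⟩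
    intro i j hij v hv w hw hvw
    have h1 := (Finset.mem_filter.1 (hQ i hv)).2
    have h2 := (Finset.mem_filter.1 (hQ j hw)).2
    rw [← hvw] at h2
    exact hd hij _ h1 h2
  · exfalso
    have hall : ∀ i, ∃ z ∈ Z, ∃ w ∈ P i, π w = z := by
      intro i
      obtain ⟨x, hx, y, hy, p, hp⟩ := hP i
      obtain ⟨q, hq⟩ := quo_walk (π := π) p (fun w hw => hS i (hp w hw))
      obtain ⟨z, hz, hzq⟩ := hsep (π x) ⟨x, ⟨hx, hS i (hp x (by simp))⟩, rfl⟩ (π y)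
        ⟨y, ⟨hy, hS i (hp y (by simp))⟩, rfl⟩ q
      obtain ⟨w, hw, hwz⟩ := hq z hzq
      exact ⟨z, hz, w, hp w hw, hwz⟩
    have h1 : (Finset.univ : Finset (Fin m)) ⊆
        hZf.toFinset.biUnion fun z => Finset.univ.filter fun i => ∃ w ∈ P i, π w = z := by
      intro i _
      obtain ⟨z, hz, hw⟩ := hall i
      simp only [Finset.mem_biUnion, Set.Finite.mem_toFinset, Finset.mem_filter, Finset.mem_univ,
        true_and]
      exact ⟨z, hz, hw⟩
    have h2 := (Finset.card_le_card h1).trans (Finset.card_biUnion_le_card_mul _ _ t fun z _ => ht z)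
    rw [Finset.card_univ, Fintype.card_fin, ← Set.ncard_eq_toFinset_card Z hZf] at h2
    nlinarith


/-- A family of disjoint nice links. -/
def IsFam (G : SimpleGraph V) (X Y : Set V) {m : ℕ} (P : Fin m → Finset V) : Prop :=
  (∀ i, NLink G X Y (P i)) ∧ ∀ i j, i ≠ j → Disjoint (P i) (P j)

open Classical in
/-- The union of a family. -/
noncomputable def famU {m : ℕ} (P : Fin m → Finset V) : Finset V := Finset.univ.biUnion P

theorem mem_famU {m : ℕ} {P : Fin m → Finset V} {v : V} : v ∈ famU P ↔ ∃ i, v ∈ P i := by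
  classical
  simp [famU]

theorem NLink.hasLink {G : SimpleGraph V} {X Y : Set V} {Q : Finset V} (h : NLink G X Y Q) :
    HasLink G X Y Q := by
  obtain ⟨⟨x, hx, y, hy, p, -, hp⟩, -⟩ := h
  exact ⟨x, hx, y, hy, p, fun w hw => (hp w).1 hw⟩

theorem NLink.connIn {G : SimpleGraph V} {X Y : Set V} {Q : Finset V} (h : NLink G X Y Q) :
    ConnIn G (Q : Set V) := by
  classical
  obtain ⟨⟨x, hx, y, hy, p, -, hp⟩, -⟩ := h
  intro a ha b hb
  have ha' := (hp a).2 ha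
  have hb' := (hp b).2 hb
  refine ⟨(p.takeUntil a ha').reverse.append (p.takeUntil b hb'), ?_⟩
  intro w hw
  rw [Walk.mem_support_append_iff, Walk.support_reverse, List.mem_reverse] at hw
  rcases hw with hw | hw
  · exact (hp w).1 (Walk.support_takeUntil_subset_support _ _ hw)
  · exact (hp w).1 (Walk.support_takeUntil_subset_support _ _ hw)

open Classical in
theorem IsFam.contract {G : SimpleGraph V} {X Y : Set V} {m m' t : ℕ} {P : Fin m → Finset V}
    (hP : IsFam G X Y P) (π : V → V)
    (hπ : ∀ v ∈ famU P, π v ∈ famU P ∧ π (π v) = π v ∧ (π v = v ∨ G.Adj v (π v)))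
    (ht1 : 1 ≤ t)
    (ht : ∀ u ∈ famU P, (Finset.univ.filter fun i => ∃ w ∈ P i, π w = u).card ≤ t)
    (hm : t * m' ≤ m) :
    ∃ Q : Fin m' → Finset V, IsFam G X Y Q ∧ famU Q ⊆ famU P ∧
      ∀ i, ∀ v ∈ Q i, ∀ w ∈ famU Q, π v = π w → w ∈ Q i := by
  obtain ⟨Q, h1, h2, h3⟩ := contract_lemma P (fun i => (hP.1 i).hasLink) (famU P)
    (fun i v hv => mem_famU.2 ⟨i, hv⟩) π hπ ht1 (fun u => by
      by_cases hu : u ∈ famU P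
      · exact ht u hu
      · rw [Finset.card_eq_zero.2]
        · omega
        · rw [Finset.filter_eq_empty_iff]
          rintro i - ⟨w, hw, rfl⟩
          exact hu (hπ w (mem_famU.2 ⟨i, hw⟩)).1) hm
  refine ⟨Q, ⟨h1, ?_⟩, ?_, ?_⟩
  · intro i j hij
    rw [Finset.disjoint_left]
    intro v hv hv'
    exact h3 i j hij v hv v hv' rfl
  · intro v hv
    obtain ⟨i, hi⟩ := mem_famU.1 hv
    exact h2 i hi
  · intro i v hv w hw hvw
    obtain ⟨j, hj⟩ := mem_famU.1 hw
    by_cases hij : i = j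
    · exact hij ▸ hj
    · exact absurd hvw (h3 i j hij v hv w hj)

/-- Removing the heavy links. -/
theorem IsFam.light {G : SimpleGraph V} {X Y : Set V} {m m' T : ℕ} (hT : HeavyC G T)
    {P : Fin m → Finset V} (hP : IsFam G X Y P) (hm : 2 * m' ≤ m) :
    ∃ Q : Fin m' → Finset V, IsFam G X Y Q ∧ famU Q ⊆ famU P ∧
      ∀ i, ∀ v ∈ Q i, (nbIdx G (fun j => (Q j : Set V)) v i).card < T := by
  classical
  set C : Fin m → Set V := fun j => (P j : Set V) with hC
  set I : Finset (Fin m) := Finset.univ.filter fun i => ∃ v ∈ P i, T ≤ (nbIdx G C v i).card with hI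
  have hex : ∀ i : Fin m, ∃ v : V, i ∈ I → v ∈ P i ∧ T ≤ (nbIdx G C v i).card := by
    intro i
    by_cases hi : i ∈ I
    · obtain ⟨v, hv⟩ := (Finset.mem_filter.1 hi).2
      exact ⟨v, fun _ => hv⟩
    · obtain ⟨⟨x, -⟩, -⟩ := hP.1 i
      exact ⟨x, fun h => absurd h hi⟩
  choose h hh using hex
  have h2 := hT m C (fun i => (hP.1 i).connIn)
    (fun i j hij => Finset.disjoint_coe.2 (hP.2 i j hij)) I h (fun i hi => (hh i hi).1)
    (fun i hi => (hh i hi).2)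
  have hc : m' ≤ (Iᶜ).card := by
    rw [Finset.card_compl, Fintype.card_fin]
    omega
  obtain ⟨s, hs, hsc⟩ := Finset.exists_subset_card_eq hc
  let e := (s.equivFinOfCardEq hsc).symm
  have einj : ∀ i j, i ≠ j → (e i : Fin m) ≠ e j := fun i j hij hh =>
    hij (e.injective (Subtype.ext hh))
  refine ⟨fun i => P (e i), ⟨fun i => hP.1 _, fun i j hij => hP.2 _ _ (einj i j hij)⟩, ?_, ?_⟩
  · intro v hv
    obtain ⟨i, hi⟩ := mem_famU.1 hv
    exact mem_famU.2 ⟨_, hi⟩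
  · intro i v hv
    have hnot := hs (e i).2
    rw [Finset.mem_compl, hI, Finset.mem_filter] at hnot
    have hlt : (nbIdx G C v (e i)).card < T := by
      by_contra hge
      exact hnot ⟨Finset.mem_univ _, v, hv, not_lt.1 hge⟩
    refine lt_of_le_of_lt ?_ hlt
    apply Finset.card_le_card_of_injOn (fun j => (e j : Fin m))
    · intro j hj
      simp only [nbIdx, Finset.coe_filter, Finset.mem_univ, true_and, Set.mem_ofPred_eq] at hj ⊢
      exact ⟨einj j i hj.1, hj.2⟩
    · intro j _ j' _ hjj
      by_contra hne
      exact einj j j' hne hjj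

theorem fam_iterate {ι : Type} {G : SimpleGraph V} {X Y : Set V} (Good : ι → Finset V → Prop)
    (her : ∀ c S S', S' ⊆ S → Good c S → Good c S') (s : ℕ) (S0 : Finset V)
    (step : ∀ (c : ι) (m m' : ℕ) (P : Fin m → Finset V), s * m' ≤ m → IsFam G X Y P → famU P ⊆ S0 →
      ∃ Q : Fin m' → Finset V, IsFam G X Y Q ∧ famU Q ⊆ famU P ∧ Good c (famU Q))
    (E : Finset ι) : ∀ (m m' : ℕ) (P : Fin m → Finset V), s ^ E.card * m' ≤ m → IsFam G X Y P →
      famU P ⊆ S0 → ∃ Q : Fin m' → Finset V, IsFam G X Y Q ∧ famU Q ⊆ famU P ∧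
        ∀ c ∈ E, Good c (famU Q) := by
  classical
  induction E using Finset.induction_on with
  | empty =>
    intro m m' P hm hP _
    simp only [Finset.card_empty, pow_zero, one_mul] at hm
    refine ⟨fun i => P (Fin.castLE hm i), ⟨fun i => hP.1 _, fun i j hij => hP.2 _ _
      (fun h => hij (Fin.castLE_injective hm h))⟩, ?_, by simp⟩
    intro v hv
    obtain ⟨i, hi⟩ := mem_famU.1 hv
    exact mem_famU.2 ⟨_, hi⟩
  | insert c E hc ih =>
    intro m m' P hm hP hS
    rw [Finset.card_insert_of_notMem hc, pow_succ, mul_assoc] at hm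
    obtain ⟨Q, h1, h2, h3⟩ := ih m (s * m') P hm hP hS
    obtain ⟨R, h4, h5, h6⟩ := step c (s * m') m' Q le_rfl h1 (h2.trans hS)
    refine ⟨R, h4, h5.trans h2, ?_⟩
    intro c' hc'
    rw [Finset.mem_insert] at hc'
    rcases hc' with rfl | hc'
    · exact h6
    · exact her c' _ _ h5 (h3 c' hc')

theorem mem_nbIdx {G : SimpleGraph V} {m : ℕ} {C : Fin m → Set V} {v : V} {i j : Fin m} :
    j ∈ nbIdx G C v i ↔ j ≠ i ∧ ∃ u ∈ C j, G.Adj v u := by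
  simp [nbIdx]

/-- The square of `G` with middle vertices in `S`. -/
def sqGraph (G : SimpleGraph V) (S : Finset V) : SimpleGraph V where
  Adj u v := u ≠ v ∧ (G.Adj u v ∨ ∃ w ∈ S, G.Adj w u ∧ G.Adj w v)
  symm := ⟨by
    rintro u v ⟨h, h' | ⟨w, hw, h1, h2⟩⟩
    · exact ⟨h.symm, Or.inl h'.symm⟩
    · exact ⟨h.symm, Or.inr ⟨w, hw, h2, h1⟩⟩⟩
  loopless := ⟨fun v h => h.1 rfl⟩

open Classical in
/-- Phase one: the bound on the in-degree for one class. -/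
theorem phaseA {G : SimpleGraph V} {X Y : Set V} {T : ℕ} (hT : HeavyC G T) (S0 : Finset V)
    {κ : Type} (col : V → κ) (g : V → V)
    (hcol : ∀ u ∈ S0, ∀ v ∈ S0, G.Adj u v → col u ≠ col v) (c : κ) (m m' : ℕ)
    (P : Fin m → Finset V) (hm : 2 * (T + 1) * m' ≤ m) (hP : IsFam G X Y P) (hS : famU P ⊆ S0) :
    ∃ Q : Fin m' → Finset V, IsFam G X Y Q ∧ famU Q ⊆ famU P ∧
      ∀ u ∈ famU Q, col u = c → ((famU Q).filter fun v => G.Adj u v ∧ g v = u).card ≤ 2 := by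
  obtain ⟨R, hR, hRP, hl⟩ := hP.light hT (m' := (T + 1) * m') (by rw [← mul_assoc]; exact hm)
  set π : V → V := fun v =>
    if g v ∈ famU R ∧ G.Adj v (g v) ∧ col (g v) = c then g v else v with hπd
  have hfix : ∀ u ∈ famU R, col u = c → π u = u := by
    intro u hu hc
    simp only [hπd]
    rw [if_neg]
    rintro ⟨h1, h2, h3⟩
    exact hcol u (hS (hRP hu)) _ (hS (hRP h1)) h2 (hc.trans h3.symm)
  have hπ : ∀ v ∈ famU R, π v ∈ famU R ∧ π (π v) = π v ∧ (π v = v ∨ G.Adj v (π v)) := by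
    intro v hv
    by_cases h : g v ∈ famU R ∧ G.Adj v (g v) ∧ col (g v) = c
    · have he : π v = g v := by simp only [hπd]; rw [if_pos h]
      rw [he]
      exact ⟨h.1, hfix _ h.1 h.2.2, Or.inr h.2.1⟩
    · have he : π v = v := by simp only [hπd]; rw [if_neg h]
      rw [he]
      exact ⟨hv, he, Or.inl rfl⟩
  obtain ⟨Q, hQ, hQR, hsame⟩ := hR.contract (m' := m') (t := T + 1) π hπ (by omega) (by
    intro u hu
    obtain ⟨i, hi⟩ := mem_famU.1 hu
    have hsub : (Finset.univ.filter fun j => ∃ w ∈ R j, π w = u) ⊆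
        insert i (nbIdx G (fun j => (R j : Set V)) u i) := by
      intro j hj
      rw [Finset.mem_filter] at hj
      obtain ⟨-, w, hw, hwu⟩ := hj
      rw [Finset.mem_insert]
      by_cases hij : j = i
      · exact Or.inl hij
      · right
        rw [mem_nbIdx]
        refine ⟨hij, w, hw, ?_⟩
        rcases (hπ w (mem_famU.2 ⟨j, hw⟩)).2.2 with h | h
        · rw [hwu] at h
          subst h
          exact absurd hw (Finset.disjoint_left.1 (hR.2 i j (Ne.symm hij)) hi)
        · rw [hwu] at h
          exact h.symm
    have h1 := Finset.card_le_card hsub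
    have h2 := Finset.card_insert_le i (nbIdx G (fun j => (R j : Set V)) u i)
    have h3 := hl i u hi
    omega) le_rfl
  refine ⟨Q, hQ, hQR.trans hRP, ?_⟩
  intro u hu hc
  obtain ⟨i, hi⟩ := mem_famU.1 hu
  have hN := (hQ.1 i).2 u hi
  rw [wdeg] at hN
  have hsub : ((famU Q).filter fun v => G.Adj u v ∧ g v = u) ⊆ (Q i).filter fun w => G.Adj u w := by
    intro v hv
    rw [Finset.mem_filter] at hv ⊢
    obtain ⟨hv1, hv2, hv3⟩ := hv
    refine ⟨hsame i u hi v hv1 ?_, hv2⟩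
    rw [hfix u (hQR hu) hc]
    simp only [hπd]
    rw [if_pos]
    · exact hv3.symm
    · rw [hv3]
      exact ⟨hQR hu, hv2.symm, hc⟩
  have := Finset.card_le_card hsub
  omega

open Classical in
/-- Phase two: one colour class of a distance-two colouring. -/
theorem phaseB {G : SimpleGraph V} {X Y : Set V} {D : ℕ} (S0 : Finset V)
    (hD : ∀ u ∈ S0, (S0.filter fun w => G.Adj u w).card ≤ D)
    {κ : Type} (col : V → κ)
    (hcol1 : ∀ u ∈ S0, ∀ v ∈ S0, G.Adj u v → col u ≠ col v)
    (hcol2 : ∀ u ∈ S0, ∀ v ∈ S0, ∀ w ∈ S0, u ≠ v → G.Adj w u → G.Adj w v → col u ≠ col v)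
    (c : κ) (m m' : ℕ)
    (P : Fin m → Finset V) (hm : (D + 1) * m' ≤ m) (hP : IsFam G X Y P) (hS : famU P ⊆ S0) :
    ∃ Q : Fin m' → Finset V, IsFam G X Y Q ∧ famU Q ⊆ famU P ∧
      ∀ u ∈ famU Q, col u = c → wdeg G X Y (famU Q) u ≤ 2 := by
  set pr : V → V → Prop := fun w v => v ∈ famU P ∧ col v = c ∧ (w = v ∨ G.Adj w v) with hpr
  have huniq : ∀ w ∈ famU P, ∀ v v', pr w v → pr w v' → v = v' := by
    rintro w hw v v' ⟨h1, h2, h3⟩ ⟨h1', h2', h3'⟩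
    by_contra hne
    rcases h3 with rfl | h3
    · rcases h3' with rfl | h3'
      · exact hne rfl
      · exact hcol1 _ (hS h1) _ (hS h1') h3' (h2.trans h2'.symm)
    · rcases h3' with rfl | h3'
      · exact hcol1 _ (hS h1') _ (hS h1) h3 (h2'.trans h2.symm)
      · exact hcol2 _ (hS h1) _ (hS h1') w (hS hw) hne h3 h3' (h2.trans h2'.symm)
  set π : V → V := fun w => if h : ∃ v, pr w v then h.choose else w with hπd
  have hval : ∀ w ∈ famU P, ∀ v, pr w v → π w = v := by
    intro w hw v hv
    have h : ∃ v, pr w v := ⟨v, hv⟩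
    simp only [hπd]
    rw [dif_pos h]
    exact huniq w hw _ _ h.choose_spec hv
  have hπ : ∀ v ∈ famU P, π v ∈ famU P ∧ π (π v) = π v ∧ (π v = v ∨ G.Adj v (π v)) := by
    intro w hw
    by_cases h : ∃ v, pr w v
    · obtain ⟨v, hv⟩ := h
      rw [hval w hw v hv]
      refine ⟨hv.1, hval v hv.1 v ⟨hv.1, hv.2.1, Or.inl rfl⟩, ?_⟩
      rcases hv.2.2 with h | h
      · exact Or.inl h.symm
      · exact Or.inr h
    · have he : π w = w := by simp only [hπd]; rw [dif_neg h]
      rw [he]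
      exact ⟨hw, he, Or.inl rfl⟩
  obtain ⟨Q, hQ, hQP, hsame⟩ := hP.contract (m' := m') (t := D + 1) π hπ (by omega) (by
    intro u hu
    have hex : ∀ i : Fin m, ∃ w, (∃ w ∈ P i, π w = u) → w ∈ P i ∧ π w = u := by
      intro i
      by_cases h : ∃ w ∈ P i, π w = u
      · obtain ⟨w, hw⟩ := h
        exact ⟨w, fun _ => hw⟩
      · exact ⟨u, fun h' => absurd h' h⟩
    choose g hg using hex
    have h1 : (Finset.univ.filter fun i => ∃ w ∈ P i, π w = u).card ≤
        (insert u (S0.filter fun w => G.Adj u w)).card := by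
      apply Finset.card_le_card_of_injOn g
      · intro i hi
        simp only [Finset.coe_filter, Finset.mem_univ, true_and, Set.mem_ofPred_eq] at hi
        obtain ⟨h1, h2⟩ := hg i hi
        have hgi := mem_famU.2 ⟨i, h1⟩
        rw [Finset.mem_coe, Finset.mem_insert, Finset.mem_filter]
        rcases (hπ _ hgi).2.2 with h | h
        · left
          rw [← h, h2]
        · right
          rw [h2] at h
          exact ⟨hS hgi, h.symm⟩
      · intro i hi j hj hij
        simp only [Finset.coe_filter, Finset.mem_univ, true_and, Set.mem_ofPred_eq] at hi hj
        by_contra hne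
        exact Finset.disjoint_left.1 (hP.2 i j hne) (hg i hi).1 (hij ▸ (hg j hj).1)
    have h2 := Finset.card_insert_le u (S0.filter fun w => G.Adj u w)
    have h3 := hD u (hS hu)
    omega) hm
  refine ⟨Q, hQ, hQP, ?_⟩
  intro u hu hc
  obtain ⟨i, hi⟩ := mem_famU.1 hu
  rw [← (hQ.1 i).2 u hi, wdeg, wdeg]
  have hsub : ((famU Q).filter fun v => G.Adj u v) ⊆ (Q i).filter fun w => G.Adj u w := by
    intro v hv
    rw [Finset.mem_filter] at hv ⊢
    refine ⟨hsame i u hi v hv.1 ?_, hv.2⟩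
    rw [hval u (hQP hu) u ⟨hQP hu, hc, Or.inl rfl⟩,
      hval v (hQP hv.1) u ⟨hQP hu, hc, Or.inr hv.2.symm⟩]
  have := Finset.card_le_card hsub
  omega

theorem main_assembly {G : SimpleGraph V} {X Y : Set V} {T k : ℕ} (hT : HeavyC G T) :
    WLk G X Y ((2 * (T + 1)) ^ (T * (T + 1)) * ((3 * T + 1) ^ (3 * T + 3 * T * (3 * T) + 1) * k)) →
    ∃ P : Fin k → PathPkg G, (∀ i, IsXYPath G X Y (P i)) ∧
      Pairwise fun i j => PkgNonAdj G (P i) (P j) := by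
  classical
  rintro ⟨P0, hP0, hd0⟩
  -- nice links to start with
  have h0 : ∀ i, ∃ Q ⊆ (P0 i).2.2.support.toFinset, NLink G X Y Q := by
    intro i
    apply HasLink.nice
    exact ⟨(P0 i).1, (hP0 i).2.1, (P0 i).2.1, (hP0 i).2.2, (P0 i).2.2, by simp⟩
  choose P1 hP1 hN1 using h0
  have hF1 : IsFam G X Y P1 := by
    refine ⟨hN1, fun i j hij => ?_⟩
    rw [Finset.disjoint_left]
    intro v hv hv'
    exact hd0 hij v (by simpa [pkgSupport] using hP1 i hv) (by simpa [pkgSupport] using hP1 j hv')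
  -- phase A
  obtain ⟨col, f, hcol, hf⟩ := degen_color G T _ (famU P1) rfl (fun U _ hU => by
    obtain ⟨v, hv, hlt⟩ := hT.degen U hU
    exact ⟨v, hv, hlt.le⟩)
  obtain ⟨P2, hF2, hU2, hG2⟩ := fam_iterate (G := G) (X := X) (Y := Y)
    (fun (c : Fin T × Fin (T + 1)) S => ∀ u ∈ S, col u = c.2 →
      (S.filter fun v => G.Adj u v ∧ f c.1 v = u).card ≤ 2)
    (by
      intro c S S' hSS h u hu hc
      exact (Finset.card_le_card (Finset.filter_subset_filter _ hSS)).trans (h u (hSS hu) hc))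
    (2 * (T + 1)) (famU P1)
    (fun c m m' P hm hP hS => phaseA hT (famU P1) col (f c.1) hcol c.2 m m' P hm hP hS)
    Finset.univ _ ((3 * T + 1) ^ (3 * T + 3 * T * (3 * T) + 1) * k) P1
    (by simp) hF1 subset_rfl
  have hD : ∀ u ∈ famU P2, ((famU P2).filter fun w => G.Adj u w).card ≤ 3 * T := by
    intro u hu
    have hsub : ((famU P2).filter fun w => G.Adj u w) ⊆
        (Finset.univ.image fun j => f j u) ∪
        Finset.univ.biUnion fun j => (famU P2).filter fun v => G.Adj u v ∧ f j v = u := by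
      intro w hw
      rw [Finset.mem_filter] at hw
      obtain ⟨j, hj | hj⟩ := hf u (hU2 hu) w (hU2 hw.1) hw.2
      · exact Finset.mem_union_left _ (Finset.mem_image.2 ⟨j, Finset.mem_univ _, hj⟩)
      · exact Finset.mem_union_right _ (Finset.mem_biUnion.2 ⟨j, Finset.mem_univ _,
          Finset.mem_filter.2 ⟨hw.1, hw.2, hj⟩⟩)
    have h1 := (Finset.card_le_card hsub).trans (Finset.card_union_le _ _)
    have h2 : (Finset.univ.image fun j => f j u).card ≤ T :=
      Finset.card_image_le.trans (by simp)
    have h3 := Finset.card_biUnion_le_card_mul Finset.univ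
      (fun j => (famU P2).filter fun v => G.Adj u v ∧ f j v = u) 2
      (fun j _ => hG2 (j, col u) (Finset.mem_univ _) u hu rfl)
    rw [Finset.card_univ, Fintype.card_fin] at h3
    omega
  -- phase B
  set H : SimpleGraph V := sqGraph G (famU P2) with hHd
  have hH : ∀ u ∈ famU P2, ((famU P2).filter fun w => H.Adj u w).card ≤
      3 * T + 3 * T * (3 * T) := by
    intro u hu
    have hsub : ((famU P2).filter fun w => H.Adj u w) ⊆
        ((famU P2).filter fun w => G.Adj u w) ∪
        ((famU P2).filter fun w => G.Adj u w).biUnion fun v =>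
          (famU P2).filter fun w => G.Adj v w := by
      intro w hw
      rw [Finset.mem_filter] at hw
      obtain ⟨hw, hne, h | ⟨z, hz, h1, h2⟩⟩ := hw
      · exact Finset.mem_union_left _ (Finset.mem_filter.2 ⟨hw, h⟩)
      · exact Finset.mem_union_right _ (Finset.mem_biUnion.2 ⟨z,
          Finset.mem_filter.2 ⟨hz, h1.symm⟩, Finset.mem_filter.2 ⟨hw, h2⟩⟩)
    refine (Finset.card_le_card hsub).trans ((Finset.card_union_le _ _).trans ?_)
    refine Nat.add_le_add (hD u hu) ?_
    refine (Finset.card_biUnion_le_card_mul _ _ (3 * T) fun v hv =>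
      hD v (Finset.mem_filter.1 hv).1).trans (Nat.mul_le_mul_right _ (hD u hu))
  obtain ⟨col2, -, hcol2, -⟩ := degen_color H (3 * T + 3 * T * (3 * T)) _ (famU P2) rfl
    (fun U hU hne => by
      obtain ⟨v, hv⟩ := hne
      exact ⟨v, hv, (Finset.card_le_card (Finset.filter_subset_filter _ hU)).trans (hH v (hU hv))⟩)
  obtain ⟨Q, hF3, hU3, hG3⟩ := fam_iterate (G := G) (X := X) (Y := Y)
    (fun (c : Fin (3 * T + 3 * T * (3 * T) + 1)) S => ∀ u ∈ S, col2 u = c → wdeg G X Y S u ≤ 2)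
    (by
      intro c S S' hSS h u hu hc
      refine le_trans ?_ (h u (hSS hu) hc)
      rw [wdeg, wdeg]
      have := Finset.card_le_card (Finset.filter_subset_filter (fun w => G.Adj u w) hSS)
      omega)
    (3 * T + 1) (famU P2)
    (fun c m m' P hm hP hS => phaseB (famU P2) hD col2
      (fun u hu v hv huv => hcol2 u hu v hv ⟨huv.ne, Or.inl huv⟩)
      (fun u hu v hv w hw hne h1 h2 => hcol2 u hu v hv ⟨hne, Or.inr ⟨w, hw, h1, h2⟩⟩)
      c m m' P hm hP hS)
    Finset.univ _ k P2 (by simp) hF2 subset_rfl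
  -- conclusion
  have hfin : ∀ i, ∀ v ∈ Q i, ∀ w ∈ famU Q, G.Adj v w → w ∈ Q i := by
    intro i v hv w hw hvw
    have hvU : v ∈ famU Q := mem_famU.2 ⟨i, hv⟩
    have h1 := hG3 (col2 v) (Finset.mem_univ _) v hvU rfl
    have h2 := (hF3.1 i).2 v hv
    rw [wdeg] at h1 h2
    have hsub : (Q i).filter (fun w => G.Adj v w) ⊆ (famU Q).filter fun w => G.Adj v w :=
      Finset.filter_subset_filter _ fun z hz => mem_famU.2 ⟨i, hz⟩
    have heq := Finset.eq_of_subset_of_card_le hsub (by omega)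
    have : w ∈ (Q i).filter (fun w => G.Adj v w) := by
      rw [heq]
      exact Finset.mem_filter.2 ⟨hw, hvw⟩
    exact (Finset.mem_filter.1 this).1
  have hlink := fun i => (hF3.1 i).1
  choose x hx y hy p hp hs using hlink
  refine ⟨fun i => ⟨x i, y i, p i⟩, fun i => ⟨hp i, hx i, hy i⟩, ?_⟩
  intro i j hij a ha b hb
  have ha' : a ∈ Q i := (hs i a).1 ha
  have hb' : b ∈ Q j := (hs j b).1 hb
  have hdis := Finset.disjoint_left.1 (hF3.2 i j hij)
  constructor
  · rintro rfl
    exact hdis ha' hb'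
  · intro hab
    exact hdis (hfin i a ha' b (mem_famU.2 ⟨j, hb'⟩) hab) hb'

theorem statement_11 (r : ℕ) :
    ∃ c : ℝ, 0 < c ∧
      ∀ (W : Type u) (G : SimpleGraph W) (X Y : Set W) (k : ℕ),
        ¬ HasTopKMinor G r →
        (∃ P : Fin k → PathPkg G,
            (∀ i, IsXYPath G X Y (P i)) ∧
            Pairwise fun i j => PkgNonAdj G (P i) (P j)) ∨
        (∃ Z : Set W, Z.Finite ∧ (Z.ncard : ℝ) < c * k ∧ XYSeparates G X Y Z) := by
  obtain ⟨T, -, hT⟩ := heavy_lemma.{u} r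
  refine ⟨(((2 * (T + 1)) ^ (T * (T + 1)) * (3 * T + 1) ^ (3 * T + 3 * T * (3 * T) + 1) : ℕ) : ℝ),
    by positivity, ?_⟩
  intro W G X Y k hG
  rcases menger G X Y ((2 * (T + 1)) ^ (T * (T + 1)) *
    ((3 * T + 1) ^ (3 * T + 3 * T * (3 * T) + 1) * k)) with h | ⟨Z, hZf, hZ, hsep⟩
  · exact Or.inl (main_assembly (hT W G hG) h)
  · refine Or.inr ⟨Z, hZf, ?_, ?_⟩
    · rw [← mul_assoc] at hZ
      exact_mod_cast hZ
    · rintro ⟨x, y, p⟩ ⟨-, hx, hy⟩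
      exact hsep x hx y hy p
end

section
/- Let G be a simple graph and let 𝒫 be a collection of pairwise disjoint paths in G such that every vertex of V(𝒫) is incident to at most one edge of E(G) \ E(𝒫). Let F be the set of edges of G[V(𝒫)] not lying on any path of 𝒫, and let H be the graph whose vertex set is F, with two edges e₁, e₂ ∈ F adjacent in H if and only if the distance between e₁ and e₂ in G is exactly 1. Then H has maximum degree at most 4, H has no 4-regular subgraph, and consequently H is 3-degenerate and admits a proper vertex colouring with four colours. -/
open SimpleGraph

universe u

variable {V : Type u}

/-- A set of pairwise disjoint members each hitting a finite set `T` has at most `|T|` members. -/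
lemma aux_card {V : Type*} {A : Type*} (mem : V → A → Prop)
    (uniq : ∀ w f g, mem w f → mem w g → f = g)
    (T : Finset V) (N : Set A) (h : ∀ f ∈ N, ∃ w ∈ T, mem w f) :
    N.Finite ∧ N.ncard ≤ T.card := by
  classical
  have h' : ∀ f : N, ∃ w ∈ T, mem w f := fun f => h f f.2
  choose φ hφ hm using h'
  have hinj : Function.Injective (fun f : N => (⟨φ f, hφ f⟩ : T)) := by
    intro f g hfg
    have : φ f = φ g := congrArg Subtype.val hfg
    exact Subtype.ext (uniq (φ f) _ _ (hm f) (this ▸ hm g))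
  have hfin : Finite N := Finite.of_injective _ hinj
  refine ⟨Set.toFinite N, ?_⟩
  have := Nat.card_le_card_of_injective _ hinj
  rw [← Nat.card_coe_set_eq]
  simpa using this

/-- In a path, an edge at the `n`-th vertex leads to a consecutive vertex. -/
lemma aux_path {V : Type*} {G : SimpleGraph V} {x y : V} (p : G.Walk x y) (hp : p.IsPath)
    (n : ℕ) (hn : n ≤ p.length) (w : V) (h : s(p.getVert n, w) ∈ p.edges) :
    (1 ≤ n ∧ w = p.getVert (n - 1)) ∨ (n + 1 ≤ p.length ∧ w = p.getVert (n + 1)) := by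
  rw [Walk.mk_mem_edges_iff_exists] at h
  obtain ⟨k, hk, he⟩ := h
  rw [Sym2.eq_iff] at he
  rcases he with ⟨h1, h2⟩ | ⟨h1, h2⟩
  · have : k = n := hp.getVert_injOn (by simp; omega) (by simpa using hn) h1
    subst this
    exact Or.inr ⟨hk, h2.symm⟩
  · have : k + 1 = n := hp.getVert_injOn (by simp; omega) (by simpa using hn) h2
    subst this
    exact Or.inl ⟨by omega, by simpa using h1.symm⟩

/-- A graph all of whose nonempty finite vertex sets contain a vertex with at most three
neighbours inside is 4-colourable on each finite set. -/
lemma aux_color {A : Type*} (H : SimpleGraph A)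
    (hd : ∀ S : Set A, S.Nonempty → ∃ e ∈ S, {f | f ∈ S ∧ H.Adj e f}.Finite ∧
      {f | f ∈ S ∧ H.Adj e f}.ncard ≤ 3) :
    ∀ (n : ℕ) (S : Finset A), S.card = n →
      ∃ c : A → Fin 4, ∀ a ∈ S, ∀ b ∈ S, H.Adj a b → c a ≠ c b := by
  classical
  intro n
  induction n with
  | zero =>
    intro S hS
    rw [Finset.card_eq_zero] at hS
    subst hS
    exact ⟨fun _ => 0, by simp⟩
  | succ n ih =>
    intro S hS
    have hne : (S : Set A).Nonempty := by
      rw [Finset.coe_nonempty, ← Finset.card_pos]; omega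
    obtain ⟨e, heS, hfin, hcard⟩ := hd S hne
    have heS' : e ∈ S := by simpa using heS
    obtain ⟨c, hc⟩ := ih (S.erase e) (by rw [Finset.card_erase_of_mem heS']; omega)
    have hT : (hfin.toFinset.image c).card < (Finset.univ : Finset (Fin 4)).card := by
      have h1 : (hfin.toFinset.image c).card ≤ hfin.toFinset.card := Finset.card_image_le
      rw [Set.ncard_eq_toFinset_card _ hfin] at hcard
      simp only [Finset.card_univ, Fintype.card_fin]
      omega
    obtain ⟨k, -, hk⟩ := Finset.exists_mem_notMem_of_card_lt_card hT
    have hk' : ∀ f ∈ S, H.Adj e f → c f ≠ k := by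
      intro f hf hef hck
      apply hk
      rw [Finset.mem_image]
      exact ⟨f, by simp [hf, hef], hck⟩
    refine ⟨Function.update c e k, ?_⟩
    intro a ha b hb hab
    by_cases hae : a = e
    · subst hae
      have hba : b ≠ a := hab.ne'
      simp only [Function.update_self, Function.update_of_ne hba]
      exact (hk' b hb hab).symm
    · by_cases hbe : b = e
      · subst hbe
        simp only [Function.update_self, Function.update_of_ne hae]
        exact hk' a ha hab.symm
      · simp only [Function.update_of_ne hae, Function.update_of_ne hbe]
        exact hc a (by simp [hae, ha]) b (by simp [hbe, hb]) hab

theorem statement_14 {ι : Type*} (G : SimpleGraph V) (P : ι → PathPkg G)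
    (hpath : ∀ i, (P i).2.2.IsPath)
    (hdisj : Pairwise fun i j => PkgDisjoint (P i) (P j))
    (hinc : ∀ v, v ∈ (⋃ i, pkgSupport (P i)) →
      Set.Subsingleton {e : Sym2 V | e ∈ G.edgeSet ∧ v ∈ e ∧ e ∉ ⋃ i, pkgEdges (P i)})
    (F : Set (Sym2 V))
    (hF : F = {e | e ∈ G.edgeSet ∧ ∀ v, v ∈ e → v ∈ ⋃ i, pkgSupport (P i)} \
      (⋃ i, pkgEdges (P i)))
    (H : SimpleGraph F)
    (hH : ∀ e₁ e₂ : F, H.Adj e₁ e₂ ↔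
      ((∃ a, a ∈ (e₁ : Sym2 V) ∧ ∃ b, b ∈ (e₂ : Sym2 V) ∧ G.Adj a b) ∧
        ¬ ∃ a : V, a ∈ (e₁ : Sym2 V) ∧ a ∈ (e₂ : Sym2 V))) :
    (∀ e : F, (H.neighborSet e).Finite ∧ (H.neighborSet e).ncard ≤ 4) ∧
    (¬ ∃ H' : H.Subgraph, H'.verts.Nonempty ∧
        ∀ v ∈ H'.verts, (H'.neighborSet v).Finite ∧ (H'.neighborSet v).ncard = 4) ∧
    (∀ H' : H.Subgraph, H'.verts.Nonempty →
        ∃ v ∈ H'.verts, (H'.neighborSet v).Finite ∧ (H'.neighborSet v).ncard ≤ 3) ∧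
    (∃ c : F → Fin 4, ∀ e₁ e₂ : F, H.Adj e₁ e₂ → c e₁ ≠ c e₂) := by
  classical
  -- vertices of edges in `F` lie on paths
  have hFe : ∀ e : F, (e : Sym2 V) ∈ G.edgeSet ∧
      (∀ v, v ∈ (e : Sym2 V) → v ∈ ⋃ i, pkgSupport (P i)) ∧
      (e : Sym2 V) ∉ ⋃ i, pkgEdges (P i) := by
    intro e
    have h := hF.subset e.2
    exact ⟨h.1.1, h.1.2, h.2⟩
  have uniq : ∀ (w : V) (f g : F), w ∈ (f : Sym2 V) → w ∈ (g : Sym2 V) → f = g := by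
    intro w f g hf hg
    obtain ⟨f1, f2, f3⟩ := hFe f
    obtain ⟨g1, g2, g3⟩ := hFe g
    exact Subtype.ext (hinc w (f2 w hf) ⟨f1, hf, f3⟩ ⟨g1, hg, g3⟩)
  -- adjacency in `H` is witnessed by a path edge
  have hadj : ∀ e f : F, H.Adj e f → ∃ x, x ∈ (e : Sym2 V) ∧ ∃ y, y ∈ (f : Sym2 V) ∧
      s(x, y) ∈ ⋃ i, pkgEdges (P i) := by
    intro e f hef
    obtain ⟨⟨x, hx, y, hy, hxy⟩, hno⟩ := (hH e f).1 hef
    refine ⟨x, hx, y, hy, ?_⟩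
    by_contra hn
    obtain ⟨e1, e2, e3⟩ := hFe e
    have : s(x, y) = (e : Sym2 V) :=
      hinc x (e2 x hx) ⟨hxy, Sym2.mem_mk_left x y, hn⟩ ⟨e1, hx, e3⟩
    exact hno ⟨y, this ▸ Sym2.mem_mk_right x y, hy⟩
  -- local structure along a path
  have hloc : ∀ i n, n ≤ (P i).2.2.length → ∀ w,
      s((P i).2.2.getVert n, w) ∈ ⋃ i, pkgEdges (P i) →
      (1 ≤ n ∧ w = (P i).2.2.getVert (n - 1)) ∨
        (n + 1 ≤ (P i).2.2.length ∧ w = (P i).2.2.getVert (n + 1)) := by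
    intro i n hn w hw
    obtain ⟨j, hj⟩ := Set.mem_iUnion.1 hw
    have hj' : s((P i).2.2.getVert n, w) ∈ (P j).2.2.edges := hj
    have hs : (P i).2.2.getVert n ∈ pkgSupport (P j) :=
      (P j).2.2.fst_mem_support_of_mem_edges hj'
    have hs' : (P i).2.2.getVert n ∈ pkgSupport (P i) := (P i).2.2.getVert_mem_support n
    have hij : i = j := by
      by_contra hne
      exact hdisj hne _ hs' hs
    subst hij
    exact aux_path _ (hpath i) n hn w hj'
  have hpos : ∀ v, v ∈ ⋃ i, pkgSupport (P i) →
      ∃ i n, n ≤ (P i).2.2.length ∧ (P i).2.2.getVert n = v := by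
    intro v hv
    obtain ⟨i, hi⟩ := Set.mem_iUnion.1 hv
    have hi' : v ∈ (P i).2.2.support := hi
    obtain ⟨n, hn, hl⟩ := Walk.mem_support_iff_exists_getVert.1 hi'
    exact ⟨i, n, hl, hn⟩
  have hlr : ∀ v, v ∈ ⋃ i, pkgSupport (P i) →
      ∃ l r, ∀ w, s(v, w) ∈ ⋃ i, pkgEdges (P i) → w = l ∨ w = r := by
    intro v hv
    obtain ⟨i, n, hn, rfl⟩ := hpos v hv
    refine ⟨(P i).2.2.getVert (n - 1), (P i).2.2.getVert (n + 1), fun w hw => ?_⟩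
    rcases hloc i n hn w hw with h | h
    · exact Or.inl h.2
    · exact Or.inr h.2
  have hdeg4 : ∀ e : F, (H.neighborSet e).Finite ∧ (H.neighborSet e).ncard ≤ 4 := by
    intro e
    obtain ⟨a, b, hab⟩ : ∃ a b, (e : Sym2 V) = s(a, b) := by
      induction h : (e : Sym2 V) with
      | _ a b => exact ⟨a, b, rfl⟩
    obtain ⟨l, r, hlra⟩ := hlr a ((hFe e).2.1 a (by simp [hab]))
    obtain ⟨l', r', hlrb⟩ := hlr b ((hFe e).2.1 b (by simp [hab]))
    have := aux_card (fun (w : V) (f : F) => w ∈ (f : Sym2 V)) uniq {l, r, l', r'}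
      (H.neighborSet e) (by
        intro f hf
        obtain ⟨x, hx, y, hy, hxy⟩ := hadj e f hf
        refine ⟨y, ?_, hy⟩
        rw [hab, Sym2.mem_iff] at hx
        rcases hx with rfl | rfl
        · rcases hlra y hxy with h | h <;> simp [h]
        · rcases hlrb y hxy with h | h <;> simp [h])
    exact ⟨this.1, this.2.trans Finset.card_le_four⟩
  have hdeg3 : ∀ S : Set F, S.Nonempty → ∃ e ∈ S, {f | f ∈ S ∧ H.Adj e f}.Finite ∧
      {f | f ∈ S ∧ H.Adj e f}.ncard ≤ 3 := by
    rintro S ⟨e₀, he₀⟩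
    obtain ⟨a₀, ha₀⟩ : ∃ a, a ∈ (e₀ : Sym2 V) := by
      induction h : (e₀ : Sym2 V) with
      | _ a b => exact ⟨a, by simp⟩
    obtain ⟨i, n₀, hn₀, hv₀⟩ := hpos a₀ ((hFe e₀).2.1 a₀ ha₀)
    have hex : ∃ n, n ≤ (P i).2.2.length ∧ ∃ f ∈ S, (P i).2.2.getVert n ∈ (f : Sym2 V) :=
      ⟨n₀, hn₀, e₀, he₀, hv₀ ▸ ha₀⟩
    obtain ⟨hn, e, heS, hae⟩ := Nat.find_spec hex
    have hmin := fun m hm => Nat.find_min hex (m := m) hm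
    generalize Nat.find hex = n at hn hae hmin
    obtain ⟨b, hab⟩ : ∃ b, (e : Sym2 V) = s((P i).2.2.getVert n, b) := by
      obtain ⟨b, hb⟩ := hae
      exact ⟨b, hb⟩
    obtain ⟨l', r', hlrb⟩ := hlr b ((hFe e).2.1 b (by simp [hab]))
    have := aux_card (fun (w : V) (f : F) => w ∈ (f : Sym2 V)) uniq
      {(P i).2.2.getVert (n + 1), l', r'} {f | f ∈ S ∧ H.Adj e f} (by
        rintro f ⟨hfS, hf⟩
        obtain ⟨x, hx, y, hy, hxy⟩ := hadj e f hf
        refine ⟨y, ?_, hy⟩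
        rw [hab, Sym2.mem_iff] at hx
        rcases hx with rfl | rfl
        · rcases hloc i n hn y hxy with h | h
          · exact absurd ⟨by omega, f, hfS, h.2 ▸ hy⟩ (hmin (n - 1) (by omega))
          · simp [h.2]
        · rcases hlrb y hxy with h | h <;> simp [h])
    exact ⟨e, heS, this.1, this.2.trans Finset.card_le_three⟩
  have hdegen : ∀ H' : H.Subgraph, H'.verts.Nonempty →
      ∃ v ∈ H'.verts, (H'.neighborSet v).Finite ∧ (H'.neighborSet v).ncard ≤ 3 := by
    intro H' hne
    obtain ⟨e, he, hfin, hcard⟩ := hdeg3 H'.verts hne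
    have hsub : H'.neighborSet e ⊆ {f | f ∈ H'.verts ∧ H.Adj e f} :=
      fun f hf => ⟨H'.edge_vert (Subgraph.Adj.symm hf), H'.adj_sub hf⟩
    exact ⟨e, he, hfin.subset hsub, (Set.ncard_le_ncard hsub hfin).trans hcard⟩
  refine ⟨hdeg4, ?_, hdegen, ?_⟩
  · rintro ⟨H', hne, hreg⟩
    obtain ⟨v, hv, -, hle⟩ := hdegen H' hne
    have := (hreg v hv).2
    omega
  · have hhom : Nonempty (H →g (⊤ : SimpleGraph (Fin 4))) := by
      apply nonempty_hom_of_forall_finite_subgraph_hom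
      intro H' hfin
      have hex := aux_color H hdeg3 _ hfin.toFinset rfl
      refine ⟨fun v => hex.choose v, ?_⟩
      intro a b hab
      exact hex.choose_spec a (by simp) b (by simp) (H'.adj_sub hab)
    obtain ⟨φ⟩ := hhom
    exact ⟨φ, fun e₁ e₂ h => φ.map_adj h⟩
end
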